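/- arXiv:0707.1475 — 2 statements merged into one kernel-verified Lean document; each statement's English description precedes it below -/
import Mathlib

section
/- Let C_{abcd} have Weyl symmetries on Minkowski space and n^a be a unit timelike vector. Define the electric and magnetic parts E_{ac} = C_{abcd} n^b n^d and B_{ac} = *C_{abcd} n^b n^d. Then E_{ab} and B_{ab} are symmetric, trace-free (E^a{}_a = B^a{}_a = 0), spatial with respect to n^a, and the orthogonal splitting of the Weyl tensor holds: C_{abcd} = 2 n_c n_{[a} E_{b]d} − 2 h_{a[d} E_{c]b} + 2 n_d n_{[b} E_{a]c} + 2 n_{[d} B^e{}_{c]} ε_{abe} + 2 n_{[b} B^e{}_{a]} ε_{cde} + 2 h_{b[d} E_{c]a}. -/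
noncomputable section

/-- The Minkowski metric `diag(-1,1,1,1)` on `ℝ⁴`. -/
def gm : Fin 4 → Fin 4 → ℝ := fun a b => if a = b then (if a = 0 then -1 else 1) else 0

/-- The totally antisymmetric volume form with `η₀₁₂₃ = 1`. -/
def eta (a b c d : Fin 4) : ℝ :=
  ((((b.val : ℤ) - a.val).sign * ((c.val : ℤ) - a.val).sign * ((d.val : ℤ) - a.val).sign *
    ((c.val : ℤ) - b.val).sign * ((d.val : ℤ) - b.val).sign * ((d.val : ℤ) - c.val).sign : ℤ) : ℝ)

/-- Index lowering: `n_a = g_{ab} n^b`. -/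
def lo (n : Fin 4 → ℝ) (a : Fin 4) : ℝ := ∑ b, gm a b * n b

/-- Spatial metric `h_{ab} = g_{ab} + n_a n_b`. -/
def hm (n : Fin 4 → ℝ) (a b : Fin 4) : ℝ := gm a b + lo n a * lo n b

/-- Spatial volume form `ε_{abc} = n^d η_{dabc}` of a unit timelike `n`. -/
def eps (n : Fin 4 → ℝ) (a b c : Fin 4) : ℝ := ∑ d, n d * eta d a b c

/-- A rank-4 tensor. -/
abbrev Tensor4 := Fin 4 → Fin 4 → Fin 4 → Fin 4 → ℝ

/-- `C_{abcd}` has the symmetries of a Weyl tensor. -/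
structure WeylSymm (C : Tensor4) : Prop where
  antisymm₁ : ∀ a b c d, C a b c d = - C b a c d
  antisymm₂ : ∀ a b c d, C a b c d = - C a b d c
  pairSymm : ∀ a b c d, C a b c d = C c d a b
  firstBianchi : ∀ a b c d,
    (1/6 : ℝ) * (C a b c d + C b c a d + C c a b d
      - C b a c d - C a c b d - C c b a d) = 0
  traceFree : ∀ b d, (∑ a, ∑ c, gm a c * C a b c d) = 0

/-- Left dual `*C_{abcd} = ½ η_{abpq} C^{pq}{}_{cd}`. -/
def dualL (C : Tensor4) (a b c d : Fin 4) : ℝ :=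
  (1/2) * ∑ p, ∑ q, eta a b p q * (∑ r, ∑ s, gm p r * gm q s * C r s c d)

/-- Electric part of the Weyl tensor `E_{ac} = C_{abcd} n^b n^d`. -/
def EW (C : Tensor4) (n : Fin 4 → ℝ) (a c : Fin 4) : ℝ := ∑ b, ∑ d, C a b c d * n b * n d

/-- Magnetic part of the Weyl tensor `B_{ac} = *C_{abcd} n^b n^d`. -/
def BW (C : Tensor4) (n : Fin 4 → ℝ) (a c : Fin 4) : ℝ := ∑ b, ∑ d, dualL C a b c d * n b * n d

/-- A tensor that is antisymmetric in two slots vanishes if its six independent entries do. -/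
lemma red2 (A : Fin 4 → Fin 4 → ℝ) (h : ∀ a b, A a b = - A b a)
    (h1 : A 0 1 = 0) (h2 : A 0 2 = 0) (h3 : A 0 3 = 0)
    (h4 : A 2 3 = 0) (h5 : A 3 1 = 0) (h6 : A 1 2 = 0) : ∀ a b, A a b = 0 := by
  intro a b
  have e := h a b
  fin_cases a <;> fin_cases b <;> simp at e ⊢ <;> linarith

/-- Index of a coordinate plane. -/
def pidx : Fin 4 → Fin 4 → Fin 6 :=
  !![0, 0, 1, 2; 0, 0, 5, 4; 1, 5, 0, 3; 2, 4, 3, 0]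

/-- Orientation of a coordinate plane. -/
def psgn : Fin 4 → Fin 4 → ℝ :=
  !![0, 1, 1, 1; -1, 0, 1, -1; -1, -1, 0, 1; -1, 1, -1, 0]

/-- The bivector matrix of a Weyl tensor in the standard frame. -/
def bivM (x y : Fin 5 → ℝ) : Fin 6 → Fin 6 → ℝ :=
  !![x 0, x 1, x 2, y 0, y 1, y 2;
    x 1, x 3, x 4, y 1, y 3, y 4;
    x 2, x 4, 0 - x 0 - x 3, y 2, y 4, 0 - y 0 - y 3;
    y 0, y 1, y 2, -(x 0), -(x 1), -(x 2);
    y 1, y 3, y 4, -(x 1), -(x 3), -(x 4);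
    y 2, y 4, 0 - y 0 - y 3, -(x 2), -(x 4), x 0 + x 3]

/-- The general Weyl tensor in the standard frame. -/
def Wt (x y : Fin 5 → ℝ) : Tensor4 := fun a b c d =>
  psgn a b * psgn c d * bivM x y (pidx a b) (pidx c d)

lemma psgn_anti (a b : Fin 4) : psgn a b = - psgn b a := by
  fin_cases a <;> fin_cases b <;> simp [psgn]

lemma pidx_symm (a b : Fin 4) : pidx a b = pidx b a := by
  fin_cases a <;> fin_cases b <;> simp [pidx]

lemma Wt_anti1 (x y : Fin 5 → ℝ) (a b c d : Fin 4) : Wt x y a b c d = - Wt x y b a c d := by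
  unfold Wt; rw [psgn_anti a b, pidx_symm a b]; ring

lemma Wt_anti2 (x y : Fin 5 → ℝ) (a b c d : Fin 4) : Wt x y a b c d = - Wt x y a b d c := by
  unfold Wt; rw [psgn_anti c d, pidx_symm c d]; ring

lemma eta_anti1 (a b c d : Fin 4) : eta a b c d = - eta b a c d := by
  unfold eta
  rw [← neg_sub (a.val : ℤ) b.val, Int.sign_neg]; push_cast; ring

lemma eta_anti2 (a b c d : Fin 4) : eta a b c d = - eta a c b d := by
  unfold eta
  rw [← neg_sub (b.val : ℤ) c.val, Int.sign_neg]; push_cast; ring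

lemma eps_anti (n : Fin 4 → ℝ) (a b c : Fin 4) : eps n a b c = - eps n b a c := by
  unfold eps
  rw [← Finset.sum_neg_distrib]
  refine Finset.sum_congr rfl fun d _ => ?_
  rw [eta_anti2 d a b c]; ring

/-- Two tensors antisymmetric in both pairs agree if they agree on independent pairs. -/
lemma red4 (T U : Tensor4) (h1 : ∀ a b c d, T a b c d = - T b a c d)
    (h2 : ∀ a b c d, T a b c d = - T a b d c)
    (k1 : ∀ a b c d, U a b c d = - U b a c d)
    (k2 : ∀ a b c d, U a b c d = - U a b d c)
    (H : ∀ p ∈ [((0 : Fin 4), (1 : Fin 4)), (0, 2), (0, 3), (2, 3), (3, 1), (1, 2)],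
      ∀ q ∈ [((0 : Fin 4), (1 : Fin 4)), (0, 2), (0, 3), (2, 3), (3, 1), (1, 2)],
      T p.1 p.2 q.1 q.2 = U p.1 p.2 q.1 q.2) : T = U := by
  have key : ∀ p ∈ [((0 : Fin 4), (1 : Fin 4)), (0, 2), (0, 3), (2, 3), (3, 1), (1, 2)],
      ∀ c d, T p.1 p.2 c d - U p.1 p.2 c d = 0 := by
    intro p hp
    have H' := H p hp
    simp only [List.forall_mem_cons] at H'
    obtain ⟨a1, a2, a3, a4, a5, a6, -⟩ := H'
    refine red2 (fun c d => T p.1 p.2 c d - U p.1 p.2 c d) ?_ ?_ ?_ ?_ ?_ ?_ ?_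
    · intro c d
      rw [h2 p.1 p.2 c d, k2 p.1 p.2 c d]; ring
    all_goals linarith
  funext a b c d
  simp only [List.forall_mem_cons] at key
  obtain ⟨a1, a2, a3, a4, a5, a6, -⟩ := key
  have := red2 (fun a b => T a b c d - U a b c d)
    (fun a b => by rw [h1 a b c d, k1 a b c d]; ring)
    (a1 c d) (a2 c d) (a3 c d) (a4 c d) (a5 c d) (a6 c d) a b
  linarith

lemma weyl_eq_Wt (C : Tensor4) (hC : WeylSymm C) : ∃ x y, C = Wt x y := by
  refine ⟨![C 0 1 0 1, C 0 1 0 2, C 0 1 0 3, C 0 2 0 2, C 0 2 0 3],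
    ![C 0 1 2 3, C 0 1 3 1, C 0 1 1 2, C 0 2 3 1, C 0 2 1 2], ?_⟩
  obtain ⟨h1, h2, h3, h4, h5⟩ := hC
  have tr : ∀ b d, - C 0 b 0 d + C 1 b 1 d + C 2 b 2 d + C 3 b 3 d = 0 := by
    intro b d
    have := h5 b d
    simp [Fin.sum_univ_four, gm] at this
    linarith
  have z1 : ∀ a c d, C a a c d = 0 := fun a c d => by have := h1 a a c d; linarith
  have z2 : ∀ a c d, C c d a a = 0 := fun a c d => by have := h2 c d a a; linarith
  have bi := h4 0 1 2 3
  have t00 := tr 0 0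
  have t01 := tr 0 1
  have t02 := tr 0 2
  have t03 := tr 0 3
  have t11 := tr 1 1
  have t12 := tr 1 2
  have t13 := tr 1 3
  have t22 := tr 2 2
  have t23 := tr 2 3
  have t33 := tr 3 3
  simp only [z1, z2] at t00 t01 t02 t03 t11 t12 t13 t22 t23 t33
  -- orient every plane in the standard way
  have r1 : ∀ c d, C 1 0 c d = - C 0 1 c d := fun c d => h1 1 0 c d
  have r2 : ∀ c d, C 2 0 c d = - C 0 2 c d := fun c d => h1 2 0 c d
  have r3 : ∀ c d, C 3 0 c d = - C 0 3 c d := fun c d => h1 3 0 c d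
  have r4 : ∀ c d, C 3 2 c d = - C 2 3 c d := fun c d => h1 3 2 c d
  have r5 : ∀ c d, C 1 3 c d = - C 3 1 c d := fun c d => h1 1 3 c d
  have r6 : ∀ c d, C 2 1 c d = - C 1 2 c d := fun c d => h1 2 1 c d
  have s1 : ∀ c d, C c d 1 0 = - C c d 0 1 := fun c d => h2 c d 1 0
  have s2 : ∀ c d, C c d 2 0 = - C c d 0 2 := fun c d => h2 c d 2 0
  have s3 : ∀ c d, C c d 3 0 = - C c d 0 3 := fun c d => h2 c d 3 0
  have s4 : ∀ c d, C c d 3 2 = - C c d 2 3 := fun c d => h2 c d 3 2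
  have s5 : ∀ c d, C c d 1 3 = - C c d 3 1 := fun c d => h2 c d 1 3
  have s6 : ∀ c d, C c d 2 1 = - C c d 1 2 := fun c d => h2 c d 2 1
  have f0 := h3 0 2 0 1
  have f1 := h3 0 3 0 1
  have f2 := h3 0 3 0 2
  have f3 := h3 2 3 0 1
  have f4 := h3 2 3 0 2
  have f5 := h3 2 3 0 3
  have f6 := h3 3 1 0 1
  have f7 := h3 3 1 0 2
  have f8 := h3 3 1 0 3
  have f9 := h3 3 1 2 3
  have f10 := h3 1 2 0 1
  have f11 := h3 1 2 0 2
  have f12 := h3 1 2 0 3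
  have f13 := h3 1 2 2 3
  have f14 := h3 1 2 3 1
  simp only [r1, r2, r3, r4, r5, r6, s1, s2, s3, s4, s5, s6, f0, f1, f2, f3, f4, f5, f6, f7, f8, f9, f10, f11, f12, f13, f14]
    at bi t00 t01 t02 t03 t11 t12 t13 t22 t23 t33
  refine red4 _ _ h1 h2 (Wt_anti1 _ _) (Wt_anti2 _ _) ?_
  simp only [List.forall_mem_cons]
  refine ⟨⟨?_, ?_, ?_, ?_, ?_, ?_, by simp⟩, ⟨?_, ?_, ?_, ?_, ?_, ?_, by simp⟩,
    ⟨?_, ?_, ?_, ?_, ?_, ?_, by simp⟩, ⟨?_, ?_, ?_, ?_, ?_, ?_, by simp⟩,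
    ⟨?_, ?_, ?_, ?_, ?_, ?_, by simp⟩, ⟨?_, ?_, ?_, ?_, ?_, ?_, by simp⟩, by simp⟩
  all_goals
    simp [Wt, psgn, pidx, bivM]
    try linarith

lemma dualL_eq (C : Tensor4) (a b c d : Fin 4) : dualL C a b c d =
    (1/2) * ∑ p, ∑ q, eta a b p q * (gm p p * gm q q * C p q c d) := by
  unfold dualL
  congr 1
  refine Finset.sum_congr rfl fun p _ => Finset.sum_congr rfl fun q _ => ?_
  congr 1
  rw [Finset.sum_eq_single p, Finset.sum_eq_single q]
  · intro s _ hs; simp [gm, hs.symm]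
  · simp
  · intro r _ hr; simp [gm, hr.symm]
  · simp

lemma dualL_Wt (x y : Fin 5 → ℝ) : dualL (Wt x y) = Wt y (-x) := by
  refine red4 _ _ ?_ ?_ (Wt_anti1 _ _) (Wt_anti2 _ _) ?_
  · intro a b c d
    simp only [dualL_eq, eta_anti1 a b, neg_mul, Finset.sum_neg_distrib, mul_neg]
  · intro a b c d
    simp only [dualL_eq, Wt_anti2 x y _ _ c d, Finset.sum_neg_distrib, mul_neg]
  simp only [List.forall_mem_cons]
  refine ⟨⟨?_, ?_, ?_, ?_, ?_, ?_, by simp⟩, ⟨?_, ?_, ?_, ?_, ?_, ?_, by simp⟩,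
    ⟨?_, ?_, ?_, ?_, ?_, ?_, by simp⟩, ⟨?_, ?_, ?_, ?_, ?_, ?_, by simp⟩,
    ⟨?_, ?_, ?_, ?_, ?_, ?_, by simp⟩, ⟨?_, ?_, ?_, ?_, ?_, ?_, by simp⟩, by simp⟩
  all_goals
    rw [dualL_eq]
    simp [Fin.sum_univ_four, Wt, psgn, pidx, bivM, eta, gm, Int.sign_eq_one_of_pos]
    try ring

lemma BW_Wt (x y : Fin 5 → ℝ) (n : Fin 4 → ℝ) : BW (Wt x y) n = EW (Wt y (-x)) n := by
  funext a c
  unfold BW EW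
  rw [dualL_Wt]

lemma Wt_pair (x y : Fin 5 → ℝ) (a b c d : Fin 4) : Wt x y a b c d = Wt x y c d a b := by
  have h : ∀ i j, bivM x y i j = bivM x y j i := by
    intro i j
    fin_cases i <;> fin_cases j <;> simp [bivM]
  unfold Wt; rw [h (pidx a b)]; ring

lemma EW_symm (x y : Fin 5 → ℝ) (n : Fin 4 → ℝ) (a b : Fin 4) :
    EW (Wt x y) n a b = EW (Wt x y) n b a := by
  unfold EW
  rw [Finset.sum_comm]
  refine Finset.sum_congr rfl fun p _ => Finset.sum_congr rfl fun q _ => ?_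
  rw [Wt_pair x y a q b p]; ring

lemma EW00 (x y : Fin 5 → ℝ) (n : Fin 4 → ℝ) : EW (Wt x y) n 0 0 =
      x 0 * n 1 * n 1 + x 1 * n 1 * n 2 + x 2 * n 1 * n 3 + x 1 * n 2 * n 1 + x 3 * n 2 * n 2
      + x 4 * n 2 * n 3 + x 2 * n 3 * n 1 + x 4 * n 3 * n 2 - x 0 * n 3 * n 3 - x 3 * n 3 * n
      3 := by
  simp [EW, Fin.sum_univ_four, Wt, psgn, pidx, bivM]
  try ring

lemma EW01 (x y : Fin 5 → ℝ) (n : Fin 4 → ℝ) : EW (Wt x y) n 0 1 =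
      0 - x 0 * n 1 * n 0 + y 2 * n 1 * n 2 - y 1 * n 1 * n 3 - x 1 * n 2 * n 0 + y 4 * n 2 *
      n 2 - y 3 * n 2 * n 3 - x 2 * n 3 * n 0 - y 0 * n 3 * n 2 - y 3 * n 3 * n 2 - y 4 * n 3
      * n 3 := by
  simp [EW, Fin.sum_univ_four, Wt, psgn, pidx, bivM]
  try ring

lemma EW02 (x y : Fin 5 → ℝ) (n : Fin 4 → ℝ) : EW (Wt x y) n 0 2 =
      0 - x 1 * n 1 * n 0 - y 2 * n 1 * n 1 + y 0 * n 1 * n 3 - x 3 * n 2 * n 0 - y 4 * n 2 *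
      n 1 + y 1 * n 2 * n 3 - x 4 * n 3 * n 0 + y 0 * n 3 * n 1 + y 3 * n 3 * n 1 + y 2 * n 3
      * n 3 := by
  simp [EW, Fin.sum_univ_four, Wt, psgn, pidx, bivM]
  try ring

lemma EW03 (x y : Fin 5 → ℝ) (n : Fin 4 → ℝ) : EW (Wt x y) n 0 3 =
      0 - x 2 * n 1 * n 0 + y 1 * n 1 * n 1 - y 0 * n 1 * n 2 - x 4 * n 2 * n 0 + y 3 * n 2 *
      n 1 - y 1 * n 2 * n 2 + x 0 * n 3 * n 0 + x 3 * n 3 * n 0 + y 4 * n 3 * n 1 - y 2 * n 3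
      * n 2 := by
  simp [EW, Fin.sum_univ_four, Wt, psgn, pidx, bivM]
  try ring

lemma EW11 (x y : Fin 5 → ℝ) (n : Fin 4 → ℝ) : EW (Wt x y) n 1 1 =
      x 0 * n 0 * n 0 - y 2 * n 0 * n 2 + y 1 * n 0 * n 3 - y 2 * n 2 * n 0 + x 0 * n 2 * n 2
      + x 3 * n 2 * n 2 + x 4 * n 2 * n 3 + y 1 * n 3 * n 0 + x 4 * n 3 * n 2 - x 3 * n 3 * n
      3 := by
  simp [EW, Fin.sum_univ_four, Wt, psgn, pidx, bivM]
  try ring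

lemma EW12 (x y : Fin 5 → ℝ) (n : Fin 4 → ℝ) : EW (Wt x y) n 1 2 =
      x 1 * n 0 * n 0 + y 2 * n 0 * n 1 - y 0 * n 0 * n 3 - y 4 * n 2 * n 0 - x 0 * n 2 * n 1
      - x 3 * n 2 * n 1 - x 2 * n 2 * n 3 + y 3 * n 3 * n 0 - x 4 * n 3 * n 1 + x 1 * n 3 * n
      3 := by
  simp [EW, Fin.sum_univ_four, Wt, psgn, pidx, bivM]
  try ring

lemma EW13 (x y : Fin 5 → ℝ) (n : Fin 4 → ℝ) : EW (Wt x y) n 1 3 =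
      x 2 * n 0 * n 0 - y 1 * n 0 * n 1 + y 0 * n 0 * n 2 + y 0 * n 2 * n 0 + y 3 * n 2 * n 0
      - x 4 * n 2 * n 1 + x 2 * n 2 * n 2 + y 4 * n 3 * n 0 + x 3 * n 3 * n 1 - x 1 * n 3 * n
      2 := by
  simp [EW, Fin.sum_univ_four, Wt, psgn, pidx, bivM]
  try ring

lemma EW22 (x y : Fin 5 → ℝ) (n : Fin 4 → ℝ) : EW (Wt x y) n 2 2 =
      x 3 * n 0 * n 0 + y 4 * n 0 * n 1 - y 1 * n 0 * n 3 + y 4 * n 1 * n 0 + x 0 * n 1 * n 1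
      + x 3 * n 1 * n 1 + x 2 * n 1 * n 3 - y 1 * n 3 * n 0 + x 2 * n 3 * n 1 - x 0 * n 3 * n
      3 := by
  simp [EW, Fin.sum_univ_four, Wt, psgn, pidx, bivM]
  try ring

lemma EW23 (x y : Fin 5 → ℝ) (n : Fin 4 → ℝ) : EW (Wt x y) n 2 3 =
      x 4 * n 0 * n 0 - y 3 * n 0 * n 1 + y 1 * n 0 * n 2 - y 0 * n 1 * n 0 - y 3 * n 1 * n 0
      + x 4 * n 1 * n 1 - x 2 * n 1 * n 2 - y 2 * n 3 * n 0 - x 1 * n 3 * n 1 + x 0 * n 3 * n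
      2 := by
  simp [EW, Fin.sum_univ_four, Wt, psgn, pidx, bivM]
  try ring

lemma EW33 (x y : Fin 5 → ℝ) (n : Fin 4 → ℝ) : EW (Wt x y) n 3 3 =
      0 - x 0 * n 0 * n 0 - x 3 * n 0 * n 0 - y 4 * n 0 * n 1 + y 2 * n 0 * n 2 - y 4 * n 1 *
      n 0 - x 3 * n 1 * n 1 + x 1 * n 1 * n 2 + y 2 * n 2 * n 0 + x 1 * n 2 * n 1 - x 0 * n 2
      * n 2 := by
  simp [EW, Fin.sum_univ_four, Wt, psgn, pidx, bivM]
  try ring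

lemma EW_props (x y : Fin 5 → ℝ) (n : Fin 4 → ℝ) :
    (∑ a, ∑ b, gm a b * EW (Wt x y) n a b) = 0 ∧
    (∀ b, (∑ a, EW (Wt x y) n a b * n a) = 0) := by
  constructor
  · simp [Fin.sum_univ_four, gm, EW00, EW11, EW22, EW33]
    ring
  · intro b
    fin_cases b <;>
    simp only [Fin.sum_univ_four, Fin.zero_eta, Fin.mk_one, Fin.reduceFinMk,
      EW_symm _ _ _ 1 0, EW_symm _ _ _ 2 0, EW_symm _ _ _ 3 0, EW_symm _ _ _ 2 1, EW_symm _ _ _ 3 1, EW_symm _ _ _ 3 2,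
      EW00, EW01, EW02, EW03, EW11, EW12, EW13, EW22, EW23, EW33] <;> ring

/-- The right-hand side of the orthogonal splitting, in terms of `E` and `B`. -/
def splitRHS (E B : Fin 4 → Fin 4 → ℝ) (n : Fin 4 → ℝ) : Tensor4 := fun a b c d =>
        lo n c * (lo n a * E b d - lo n b * E a d)
        - (hm n a d * E c b - hm n a c * E d b)
        + lo n d * (lo n b * E a c - lo n a * E b c)
        + (∑ e, ∑ f, (lo n d * gm e f * B f c - lo n c * gm e f * B f d)
            * eps n a b e)
        + (∑ e, ∑ f, (lo n b * gm e f * B f a - lo n a * gm e f * B f b)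
            * eps n c d e)
        + (hm n b d * E c a - hm n b c * E d a)

lemma splitRHS_eq (E B : Fin 4 → Fin 4 → ℝ) (n : Fin 4 → ℝ) (a b c d : Fin 4) :
    splitRHS E B n a b c d = lo n c * (lo n a * E b d - lo n b * E a d)
        - (hm n a d * E c b - hm n a c * E d b)
        + lo n d * (lo n b * E a c - lo n a * E b c)
        + (∑ e, (lo n d * gm e e * B e c - lo n c * gm e e * B e d) * eps n a b e)
        + (∑ e, (lo n b * gm e e * B e a - lo n a * gm e e * B e b) * eps n c d e)
        + (hm n b d * E c a - hm n b c * E d a) := by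
  unfold splitRHS
  have key : ∀ (F : Fin 4 → ℝ) (u v : ℝ) (P Q : Fin 4 → ℝ),
      (∑ e, ∑ f, (u * gm e f * P f - v * gm e f * Q f) * F e) =
        ∑ e, (u * gm e e * P e - v * gm e e * Q e) * F e := by
    intro F u v P Q
    refine Finset.sum_congr rfl fun e _ => ?_
    rw [Finset.sum_eq_single e]
    · intro f _ hf; simp [gm, hf.symm]
    · simp
  rw [key (eps n a b) _ _ (fun f => B f c) (fun f => B f d),
    key (eps n c d) _ _ (fun f => B f a) (fun f => B f b)]

lemma lo0 (n : Fin 4 → ℝ) : lo n 0 = - n 0 := by simp [lo, Fin.sum_univ_four, gm]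
lemma lo1 (n : Fin 4 → ℝ) : lo n 1 = n 1 := by simp [lo, Fin.sum_univ_four, gm]
lemma lo2 (n : Fin 4 → ℝ) : lo n 2 = n 2 := by simp [lo, Fin.sum_univ_four, gm]
lemma lo3 (n : Fin 4 → ℝ) : lo n 3 = n 3 := by simp [lo, Fin.sum_univ_four, gm]

lemma eps_vals (n : Fin 4 → ℝ) :
    eps n 0 1 0 = 0 ∧ eps n 0 1 1 = 0 ∧ eps n 0 1 2 = -n 3 ∧ eps n 0 1 3 = n 2 ∧
    eps n 0 2 0 = 0 ∧ eps n 0 2 1 = n 3 ∧ eps n 0 2 2 = 0 ∧ eps n 0 2 3 = -n 1 ∧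
    eps n 0 3 0 = 0 ∧ eps n 0 3 1 = -n 2 ∧ eps n 0 3 2 = n 1 ∧ eps n 0 3 3 = 0 ∧
    eps n 2 3 0 = -n 1 ∧ eps n 2 3 1 = n 0 ∧ eps n 2 3 2 = 0 ∧ eps n 2 3 3 = 0 ∧
    eps n 3 1 0 = -n 2 ∧ eps n 3 1 1 = 0 ∧ eps n 3 1 2 = n 0 ∧ eps n 3 1 3 = 0 ∧
    eps n 1 2 0 = -n 3 ∧ eps n 1 2 1 = 0 ∧ eps n 1 2 2 = 0 ∧ eps n 1 2 3 = n 0 := by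
  simp [eps, Fin.sum_univ_four, eta, Int.sign_eq_one_of_pos]

lemma gm_vals : gm 0 0 = -1 ∧ gm 1 1 = 1 ∧ gm 2 2 = 1 ∧ gm 3 3 = 1 ∧ gm 0 1 = 0 ∧ gm 0 2 = 0 ∧
    gm 0 3 = 0 ∧ gm 1 0 = 0 ∧ gm 1 2 = 0 ∧ gm 1 3 = 0 ∧ gm 2 0 = 0 ∧ gm 2 1 = 0 ∧ gm 2 3 = 0 ∧
    gm 3 0 = 0 ∧ gm 3 1 = 0 ∧ gm 3 2 = 0 := by
  simp [gm]

lemma splitRHS_anti1 (E B : Fin 4 → Fin 4 → ℝ) (hE : ∀ a b, E a b = E b a)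
    (n : Fin 4 → ℝ) (a b c d : Fin 4) :
    splitRHS E B n a b c d = - splitRHS E B n b a c d := by
  rw [splitRHS_eq, splitRHS_eq]
  simp only [eps_anti n a b, Fin.sum_univ_four, hE c, hE d]
  ring

lemma splitRHS_anti2 (E B : Fin 4 → Fin 4 → ℝ)
    (n : Fin 4 → ℝ) (a b c d : Fin 4) :
    splitRHS E B n a b c d = - splitRHS E B n a b d c := by
  rw [splitRHS_eq, splitRHS_eq]
  simp only [eps_anti n c d, Fin.sum_univ_four]
  ring

set_option linter.unusedSimpArgs false

set_option maxHeartbeats 20000000 in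
lemma split_rows (x y : Fin 5 → ℝ) (n : Fin 4 → ℝ)
    (hn : -(n 0 * n 0) + n 1 * n 1 + n 2 * n 2 + n 3 * n 3 = -1) :
    ∀ p ∈ [((0 : Fin 4), (1 : Fin 4)), (0, 2), (0, 3), (2, 3), (3, 1), (1, 2)],
    ∀ q ∈ [((0 : Fin 4), (1 : Fin 4)), (0, 2), (0, 3), (2, 3), (3, 1), (1, 2)],
      Wt x y p.1 p.2 q.1 q.2 =
        splitRHS (EW (Wt x y) n) (EW (Wt y (-x)) n) n p.1 p.2 q.1 q.2 := by
  obtain ⟨g0, g1, g2, g3, g01, g02, g03, g10, g12, g13, g20, g21, g23, g30, g31, g32⟩ := gm_vals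
  obtain ⟨e0, e1, e2, e3, e4, e5, e6, e7, e8, e9, e10, e11, e12, e13, e14, e15, e16, e17, e18, e19, e20, e21, e22, e23⟩ := eps_vals n
  have key : ∀ a b c d : Fin 4, ∀ N : ℝ, N = -1 →
      Wt x y a b c d * N ^ 2 +
        N * (-(gm a d * EW (Wt x y) n c b - gm a c * EW (Wt x y) n d b)
          + (gm b d * EW (Wt x y) n c a - gm b c * EW (Wt x y) n d a)) -
        (splitRHS (EW (Wt x y) n) (EW (Wt y (-x)) n) n a b c d
          - (-(gm a d * EW (Wt x y) n c b - gm a c * EW (Wt x y) n d b)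
          + (gm b d * EW (Wt x y) n c a - gm b c * EW (Wt x y) n d a))) = 0 →
      Wt x y a b c d = splitRHS (EW (Wt x y) n) (EW (Wt y (-x)) n) n a b c d := by
    intro a b c d N hN h
    subst hN
    linear_combination h
  simp only [List.forall_mem_cons]
  refine ⟨⟨?_, ?_, ?_, ?_, ?_, ?_, by simp⟩, ⟨?_, ?_, ?_, ?_, ?_, ?_, by simp⟩,
    ⟨?_, ?_, ?_, ?_, ?_, ?_, by simp⟩, ⟨?_, ?_, ?_, ?_, ?_, ?_, by simp⟩,
    ⟨?_, ?_, ?_, ?_, ?_, ?_, by simp⟩, ⟨?_, ?_, ?_, ?_, ?_, ?_, by simp⟩, by simp⟩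
  all_goals
    refine key _ _ _ _ _ hn ?_
    rw [splitRHS_eq]
    simp only [Fin.sum_univ_four, hm, lo0, lo1, lo2, lo3,
      g0, g1, g2, g3, g01, g02, g03, g10, g12, g13, g20, g21, g23, g30, g31, g32,
      e0, e1, e2, e3, e4, e5, e6, e7, e8, e9, e10, e11,
      e12, e13, e14, e15, e16, e17, e18, e19, e20, e21, e22, e23,
      EW_symm _ _ _ 1 0, EW_symm _ _ _ 2 0, EW_symm _ _ _ 3 0, EW_symm _ _ _ 2 1, EW_symm _ _ _ 3 1, EW_symm _ _ _ 3 2,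
      EW00, EW01, EW02, EW03, EW11, EW12, EW13, EW22, EW23, EW33]
    simp [Wt, psgn, pidx, bivM]
    ring

lemma splitting (x y : Fin 5 → ℝ) (n : Fin 4 → ℝ)
    (hn : -(n 0 * n 0) + n 1 * n 1 + n 2 * n 2 + n 3 * n 3 = -1) :
    Wt x y = splitRHS (EW (Wt x y) n) (EW (Wt y (-x)) n) n := by
  refine red4 _ _ (Wt_anti1 _ _) (Wt_anti2 _ _) (splitRHS_anti1 _ _ (EW_symm x y n) n)
    (splitRHS_anti2 _ _ n) (split_rows x y n hn)

/-- The electric and magnetic parts of the Weyl tensor are symmetric, trace-free and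
spatial, and the Weyl tensor admits the stated orthogonal splitting. -/
theorem weyl_orthogonal_splitting
    (C : Tensor4) (hC : WeylSymm C)
    (n : Fin 4 → ℝ) (hn : (∑ a, ∑ b, gm a b * n a * n b) = -1) :
    (∀ a b, EW C n a b = EW C n b a) ∧
    (∀ a b, BW C n a b = BW C n b a) ∧
    (∑ a, ∑ b, gm a b * EW C n a b) = 0 ∧
    (∑ a, ∑ b, gm a b * BW C n a b) = 0 ∧
    (∀ b, (∑ a, EW C n a b * n a) = 0 ∧ (∑ a, EW C n b a * n a) = 0) ∧
    (∀ b, (∑ a, BW C n a b * n a) = 0 ∧ (∑ a, BW C n b a * n a) = 0) ∧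
    (∀ a b c d : Fin 4,
      C a b c d =
        lo n c * (lo n a * EW C n b d - lo n b * EW C n a d)
        - (hm n a d * EW C n c b - hm n a c * EW C n d b)
        + lo n d * (lo n b * EW C n a c - lo n a * EW C n b c)
        + (∑ e, ∑ f, (lo n d * gm e f * BW C n f c - lo n c * gm e f * BW C n f d)
            * eps n a b e)
        + (∑ e, ∑ f, (lo n b * gm e f * BW C n f a - lo n a * gm e f * BW C n f b)
            * eps n c d e)
        + (hm n b d * EW C n c a - hm n b c * EW C n d a)) := by
  obtain ⟨x, y, rfl⟩ := weyl_eq_Wt C hC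
  have hn' : -(n 0 * n 0) + n 1 * n 1 + n 2 * n 2 + n 3 * n 3 = -1 := by
    simp [Fin.sum_univ_four, gm] at hn
    linarith
  rw [BW_Wt]
  refine ⟨EW_symm x y n, EW_symm _ _ n, (EW_props x y n).1, (EW_props _ _ n).1,
    fun b => ⟨(EW_props x y n).2 b, ?_⟩, fun b => ⟨(EW_props _ _ n).2 b, ?_⟩, ?_⟩
  · simp only [EW_symm x y n b]
    exact (EW_props x y n).2 b
  · simp only [EW_symm y (-x) n b]
    exact (EW_props _ _ n).2 b
  · intro a b c d
    exact congrFun (congrFun (congrFun (congrFun (splitting x y n hn') a) b) c) d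
end
end

section
/- Let C_{abcd} have Weyl symmetries on Minkowski space, n^a be a unit timelike vector, and define E_{ac} = C_{abcd} n^b n^d and B_{ac} = *C_{abcd} n^b n^d. Then the Bel-Robinson tensor T_{abcd} = C_a{}^p{}_d{}^f C_{bpcf} + C_a{}^p{}_c{}^f C_{bpdf} − ⅛ g_{ab} g_{cd} C_{pqrs} C^{pqrs} admits the orthogonal splitting T_{abcd} = W n_a n_b n_c n_d + 4 𝒫_{(a} n_b n_c n_{d)} + 6 t_{(ab} n_c n_{d)} + 4 Q_{(abc} n_{d)} + t_{abcd}, where W = E_{ab} E^{ab} + B_{ab} B^{ab}, 𝒫_a = 2 B_p{}^l E_{ql} ε_a{}^{pq}, t_{ab} = W h_{ab} − 2 (B_a{}^c B_{bc} + E_a{}^c E_{bc}), Q_{cdb} = h_{cd} 𝒫_b − 2 (B_{da} E_{cf} + B_{ca} E_{df}) ε_b{}^{af}, and t_{abcd} = 4 (B_{ab} B_{cd} + E_{ab} E_{cd}) − h_{cd} t_{ab} + 2 h_{b(d} t_{c)a} + 2 h_{a(d} t_{c)b} − h_{ab} t_{cd} + W (h_{ab} h_{cd} − 2 h_{a(c}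 h_{d)b}). -/
noncomputable section

/-- Full contraction `A_{pqrs} B^{pqrs}`. -/
def q4 (A B : Tensor4) : ℝ :=
  ∑ e, ∑ f, ∑ p, ∑ h, ∑ r, ∑ s, ∑ t, ∑ u,
    A e f p h * gm e r * gm f s * gm p t * gm h u * B r s t u

/-- The Bel-Robinson tensor
`T_{abcd} = C_a{}^p{}_d{}^f C_{bpcf} + C_a{}^p{}_c{}^f C_{bpdf} − ⅛ g_{ab} g_{cd} C_{pqrs} C^{pqrs}`. -/
def BR (C : Tensor4) (a b c d : Fin 4) : ℝ :=
  (∑ p, ∑ f, ∑ r, ∑ s, gm p r * gm f s * C a r d s * C b p c f)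
  + (∑ p, ∑ f, ∑ r, ∑ s, gm p r * gm f s * C a r c s * C b p d f)
  - (1/8) * gm a b * gm c d * q4 C C

/-- Superenergy density `W = E_{ab} E^{ab} + B_{ab} B^{ab}`. -/
def Wse (C : Tensor4) (n : Fin 4 → ℝ) : ℝ :=
  (∑ a, ∑ b, ∑ c, ∑ d, EW C n a b * gm a c * gm b d * EW C n c d)
  + (∑ a, ∑ b, ∑ c, ∑ d, BW C n a b * gm a c * gm b d * BW C n c d)

/-- Super-Poynting vector `𝒫_a = 2 B_p{}^l E_{ql} ε_a{}^{pq}`. -/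
def Pse (C : Tensor4) (n : Fin 4 → ℝ) (a : Fin 4) : ℝ :=
  2 * ∑ p, ∑ q, ∑ l, ∑ m, ∑ r, ∑ s,
    gm l m * BW C n p m * EW C n q l * gm p r * gm q s * eps n a r s

/-- `t_{ab} = W h_{ab} − 2 (B_a{}^c B_{bc} + E_a{}^c E_{bc})`. -/
def tse (C : Tensor4) (n : Fin 4 → ℝ) (a b : Fin 4) : ℝ :=
  Wse C n * hm n a b
    - 2 * (∑ c, ∑ d, gm c d * (BW C n a d * BW C n b c + EW C n a d * EW C n b c))

/-- `Q_{cdb} = h_{cd} 𝒫_b − 2 (B_{da} E_{cf} + B_{ca} E_{df}) ε_b{}^{af}`. -/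
def Qse (C : Tensor4) (n : Fin 4 → ℝ) (c d b : Fin 4) : ℝ :=
  hm n c d * Pse C n b
    - 2 * ∑ a, ∑ f, ∑ r, ∑ s,
        (BW C n d a * EW C n c f + BW C n c a * EW C n d f) * gm a r * gm f s * eps n b r s

/-- The fully spatial part `t_{abcd}` of the Bel-Robinson tensor. -/
def tse4 (C : Tensor4) (n : Fin 4 → ℝ) (a b c d : Fin 4) : ℝ :=
  4 * (BW C n a b * BW C n c d + EW C n a b * EW C n c d)
  - hm n c d * tse C n a b
  + (hm n b d * tse C n c a + hm n b c * tse C n d a)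
  + (hm n a d * tse C n c b + hm n a c * tse C n d b)
  - hm n a b * tse C n c d
  + Wse C n * (hm n a b * hm n c d - (hm n a c * hm n d b + hm n a d * hm n c b))

/-- Total symmetrization of a rank-4 tensor. -/
def sym4 (T : Tensor4) (a b c d : Fin 4) : ℝ :=
  (1/24) * ∑ σ : Equiv.Perm (Fin 4),
    T (![a, b, c, d] (σ 0)) (![a, b, c, d] (σ 1)) (![a, b, c, d] (σ 2)) (![a, b, c, d] (σ 3))


set_option linter.unusedSimpArgs false
set_option linter.unusedVariables false

namespace BRSplit

/-- Signature of the Minkowski metric. -/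
def sg (a : Fin 4) : ℝ := if a = 0 then -1 else 1

lemma gm_def (a b : Fin 4) : gm a b = if a = b then sg a else 0 := rfl

lemma lo_eq (n : Fin 4 → ℝ) (a : Fin 4) : lo n a = sg a * n a := by
  simp [lo, gm_def]

lemma dualL_eq (C : Tensor4) (a b c d : Fin 4) :
    dualL C a b c d = (1/2) * ∑ p, ∑ q, sg p * (sg q * (eta a b p q * C p q c d)) := by
  simp only [dualL, gm_def, mul_ite, ite_mul, zero_mul, mul_zero, Finset.sum_ite_eq,
    Finset.mem_univ, if_true]
  congr 1
  refine Finset.sum_congr rfl fun p _ => Finset.sum_congr rfl fun q _ => ?_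
  ring

lemma q4_eq (A B : Tensor4) : q4 A B =
    ∑ e, ∑ f, sg e * (sg f * ∑ p, ∑ h, sg p * (sg h * (A e f p h * B e f p h))) := by
  simp only [q4, gm_def, mul_ite, ite_mul, zero_mul, mul_zero, Finset.sum_ite_eq,
    Finset.mem_univ, if_true, Finset.mul_sum]
  refine Finset.sum_congr rfl fun p _ => Finset.sum_congr rfl fun q _ =>
    Finset.sum_congr rfl fun _ _ => Finset.sum_congr rfl fun _ _ => ?_
  ring

/-- The double contraction appearing in the Bel-Robinson tensor. -/
def K (C : Tensor4) (a b c d : Fin 4) : ℝ :=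
  ∑ p, ∑ f, sg p * (sg f * (C a p d f * C b p c f))

lemma BR_eq (C : Tensor4) (a b c d : Fin 4) :
    BR C a b c d = K C a b c d + K C a b d c - (1/8) * gm a b * gm c d * q4 C C := by
  have : ∀ c d, (∑ p, ∑ f, ∑ r, ∑ s, gm p r * gm f s * C a r d s * C b p c f) = K C a b c d := by
    intro c d
    simp only [K, gm_def, mul_ite, ite_mul, zero_mul, mul_zero, Finset.sum_ite_eq,
      Finset.mem_univ, if_true]
    refine Finset.sum_congr rfl fun p _ => Finset.sum_congr rfl fun q _ => ?_
    ring
  rw [BR, this, this]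

lemma Wse_eq (C : Tensor4) (n : Fin 4 → ℝ) : Wse C n =
    (∑ a, ∑ b, sg a * (sg b * (EW C n a b * EW C n a b))) +
    (∑ a, ∑ b, sg a * (sg b * (BW C n a b * BW C n a b))) := by
  simp only [Wse, gm_def, mul_ite, ite_mul, zero_mul, mul_zero, Finset.sum_ite_eq,
      Finset.mem_univ, if_true]
  congr 1 <;>
  refine Finset.sum_congr rfl fun p _ => Finset.sum_congr rfl fun q _ => ?_ <;>
  ring

/-- The single contraction `X_a{}^l Y_{bl}`. -/
def ct (X Y : Fin 4 → Fin 4 → ℝ) (a b : Fin 4) : ℝ := ∑ l, sg l * (X a l * Y b l)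

lemma Pse_eq (C : Tensor4) (n : Fin 4 → ℝ) (a : Fin 4) : Pse C n a =
    2 * ∑ p, ∑ q, sg p * (sg q * (ct (BW C n) (EW C n) p q * eps n a p q)) := by
  simp only [Pse, ct, gm_def, mul_ite, ite_mul, zero_mul, mul_zero, Finset.sum_ite_eq,
      Finset.mem_univ, if_true, Finset.mul_sum, Finset.sum_mul]
  refine Finset.sum_congr rfl fun p _ => Finset.sum_congr rfl fun q _ =>
    Finset.sum_congr rfl fun _ _ => ?_
  ring

lemma tse_eq (C : Tensor4) (n : Fin 4 → ℝ) (a b : Fin 4) : tse C n a b =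
    Wse C n * hm n a b - 2 * (ct (BW C n) (BW C n) a b + ct (EW C n) (EW C n) a b) := by
  simp only [tse, ct, gm_def, mul_ite, ite_mul, zero_mul, mul_zero, Finset.sum_ite_eq,
      Finset.mem_univ, if_true, mul_add, Finset.sum_add_distrib]

/-- The contraction appearing in `Q`. -/
def J (C : Tensor4) (n : Fin 4 → ℝ) (c d b : Fin 4) : ℝ :=
  ∑ a, ∑ f, sg a * (sg f * ((BW C n d a * EW C n c f) * eps n b a f))

lemma Qse_eq (C : Tensor4) (n : Fin 4 → ℝ) (c d b : Fin 4) : Qse C n c d b =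
    hm n c d * Pse C n b - 2 * (J C n c d b + J C n d c b) := by
  simp only [Qse, J, gm_def, mul_ite, ite_mul, zero_mul, mul_zero, Finset.sum_ite_eq,
      Finset.mem_univ, if_true, ← Finset.sum_add_distrib]
  congr 2
  refine Finset.sum_congr rfl fun p _ => Finset.sum_congr rfl fun q _ => ?_
  ring

lemma sym4_eq (T : Tensor4) (a b c d : Fin 4) : sym4 T a b c d = (1/24) *
    (T a b c d + T a b d c + T a c b d + T a c d b + T a d b c + T a d c b
    + T b a c d + T b a d c + T b c a d + T b c d a + T b d a c + T b d c a
    + T c a b d + T c a d b + T c b a d + T c b d a + T c d a b + T c d b a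
    + T d a b c + T d a c b + T d b a c + T d b c a + T d c a b + T d c b a) := by
  have key : ∀ F : Fin 4 → Fin 4 → Fin 4 → Fin 4 → ℝ,
      ∑ σ : Equiv.Perm (Fin 4), F (σ 0) (σ 1) (σ 2) (σ 3) =
    (F 0 1 2 3 + F 0 1 3 2 + F 0 2 1 3 + F 0 2 3 1 + F 0 3 1 2 + F 0 3 2 1
    + F 1 0 2 3 + F 1 0 3 2 + F 1 2 0 3 + F 1 2 3 0 + F 1 3 0 2 + F 1 3 2 0
    + F 2 0 1 3 + F 2 0 3 1 + F 2 1 0 3 + F 2 1 3 0 + F 2 3 0 1 + F 2 3 1 0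
    + F 3 0 1 2 + F 3 0 2 1 + F 3 1 0 2 + F 3 1 2 0 + F 3 2 0 1 + F 3 2 1 0) := by
    intro F
    have hu : (Finset.univ : Finset (Equiv.Perm (Fin 4))).val.map
        (fun σ => (σ 0, σ 1, σ 2, σ 3)) =
      ({(0,1,2,3),(0,1,3,2),(0,2,1,3),(0,2,3,1),(0,3,1,2),(0,3,2,1),
       (1,0,2,3),(1,0,3,2),(1,2,0,3),(1,2,3,0),(1,3,0,2),(1,3,2,0),
       (2,0,1,3),(2,0,3,1),(2,1,0,3),(2,1,3,0),(2,3,0,1),(2,3,1,0),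
       (3,0,1,2),(3,0,2,1),(3,1,0,2),(3,1,2,0),(3,2,0,1),(3,2,1,0)} :
       Multiset (Fin 4 × Fin 4 × Fin 4 × Fin 4)) := by decide
    have := congrArg (fun m => (m.map (fun t => F t.1 t.2.1 t.2.2.1 t.2.2.2)).sum) hu
    simp only [Multiset.map_map, Function.comp_def] at this
    rw [Finset.sum_eq_multiset_sum, this]
    simp only [Multiset.insert_eq_cons, Multiset.map_cons, Multiset.sum_cons,
      Multiset.map_singleton, Multiset.sum_singleton]
    ring
  rw [sym4, key (fun x y z w => T (![a, b, c, d] x) (![a, b, c, d] y)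
    (![a, b, c, d] z) (![a, b, c, d] w))]
  rfl

/-! ### Change of frame -/

/-- Transformation of one index by the frame `L`. -/
def D (L : Fin 4 → Fin 4 → ℝ) (x : Fin 4 → ℝ) (i : Fin 4) : ℝ := ∑ a, L a i * x a

section frame
variable (L : Fin 4 → Fin 4 → ℝ)

lemma D_add (x y : Fin 4 → ℝ) (i : Fin 4) :
    D L (fun a => x a + y a) i = D L (fun a => x a) i + D L (fun a => y a) i := by
  simp [D, mul_add, Finset.sum_add_distrib]

lemma D_sub (x y : Fin 4 → ℝ) (i : Fin 4) :
    D L (fun a => x a - y a) i = D L (fun a => x a) i - D L (fun a => y a) i := by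
  simp [D, mul_sub, Finset.sum_sub_distrib]

lemma D_neg (x : Fin 4 → ℝ) (i : Fin 4) :
    D L (fun a => - x a) i = - D L (fun a => x a) i := by
  simp [D]

lemma D_mul_left (c : ℝ) (x : Fin 4 → ℝ) (i : Fin 4) :
    D L (fun a => c * x a) i = c * D L (fun a => x a) i := by
  simp only [D, Finset.mul_sum]
  exact Finset.sum_congr rfl fun _ _ => by ring

lemma D_mul_right (c : ℝ) (x : Fin 4 → ℝ) (i : Fin 4) :
    D L (fun a => x a * c) i = D L (fun a => x a) i * c := by
  simp only [D, Finset.sum_mul]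
  exact Finset.sum_congr rfl fun _ _ => by ring

lemma D_sum (x : Fin 4 → Fin 4 → ℝ) (i : Fin 4) :
    D L (fun a => ∑ p, x a p) i = ∑ p, D L (fun a => x a p) i := by
  simp only [D, Finset.mul_sum]
  exact Finset.sum_comm

lemma D_comm (x : Fin 4 → Fin 4 → ℝ) (i j : Fin 4) :
    D L (fun a => D L (fun b => x a b) j) i = D L (fun b => D L (fun a => x a b) i) j := by
  simp only [D, Finset.mul_sum]
  rw [Finset.sum_comm]
  exact Finset.sum_congr rfl fun _ _ => Finset.sum_congr rfl fun _ _ => by ring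

/-- Transformation of a rank-4 tensor. -/
def tr4 (T : Tensor4) : Tensor4 := fun i j k l =>
  D L (fun a => D L (fun b => D L (fun c => D L (fun d => T a b c d) l) k) j) i

/-- `L` is an oriented orthonormal frame. -/
structure Fr (L : Fin 4 → Fin 4 → ℝ) : Prop where
  h1 : ∀ a b, ∑ p, sg p * (L a p * L b p) = gm a b
  h2 : ∀ i j, D L (fun a => D L (fun b => gm a b) j) i = gm i j
  h3 : ∀ i j k l, tr4 L eta i j k l = eta i j k l

variable {L}

lemma con1 (h : Fr L) (x y : Fin 4 → ℝ) :
    ∑ p, sg p * (D L x p * D L y p) = ∑ p, sg p * (x p * y p) := by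
  have e : ∀ p, sg p * (D L x p * D L y p)
      = ∑ a, ∑ b, (sg p * (L a p * L b p)) * (x a * y b) := by
    intro p
    rw [D, D, Finset.sum_mul_sum]
    simp only [Finset.mul_sum]
    exact Finset.sum_congr rfl fun _ _ => Finset.sum_congr rfl fun _ _ => by ring
  simp only [e]
  rw [Finset.sum_comm]
  refine Finset.sum_congr rfl fun a _ => ?_
  rw [Finset.sum_comm]
  simp only [← Finset.sum_mul, h.h1, gm_def]
  simp

lemma con2 (h : Fr L) (X Y : Fin 4 → Fin 4 → ℝ) :
    ∑ p, ∑ q, sg p * (sg q * (D L (fun a => D L (fun b => X a b) q) p *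
      D L (fun a => D L (fun b => Y a b) q) p))
    = ∑ p, ∑ q, sg p * (sg q * (X p q * Y p q)) := by
  simp only [← Finset.mul_sum]
  have e : ∀ p, ∑ q, sg q * (D L (fun a => D L (fun b => X a b) q) p *
      D L (fun a => D L (fun b => Y a b) q) p)
      = ∑ q, sg q * (D L (fun b => X b q) p * D L (fun b => Y b q) p) := by
    intro p
    have := con1 h (fun b => D L (fun a => X a b) p) (fun b => D L (fun a => Y a b) p)
    rw [← this]
    refine Finset.sum_congr rfl fun q _ => ?_
    rw [D_comm L X, D_comm L Y]
  simp only [e, Finset.mul_sum]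
  rw [Finset.sum_comm]
  conv_rhs => rw [Finset.sum_comm]
  refine Finset.sum_congr rfl fun q _ => ?_
  have := con1 h (fun a => X a q) (fun a => Y a q)
  have h' := congrArg (fun z => sg q * z) this
  simp only [Finset.mul_sum] at h'
  convert h' using 2 <;> ring

lemma D_inj (h : Fr L) (x : Fin 4 → ℝ) (hx : ∀ i, D L (fun a => x a) i = 0) (a : Fin 4) :
    x a = 0 := by
  have := con1 h x (fun b => if a = b then 1 else 0)
  simp only [hx, zero_mul, mul_zero, Finset.sum_const_zero] at this
  simp at this
  rcases this with h | h
  · exfalso; revert h; unfold sg; split_ifs <;> norm_num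
  · exact h

lemma tr4_inj (h : Fr L) (T : Tensor4) (hT : ∀ i j k l, tr4 L T i j k l = 0)
    (a b c d : Fin 4) : T a b c d = 0 := by
  have h1 : ∀ a j k l, D L (fun b => D L (fun c => D L (fun d => T a b c d) l) k) j = 0 :=
    fun a j k l => D_inj h (fun a => D L (fun b => D L (fun c => D L (fun d => T a b c d) l) k) j)
      (fun i => hT i j k l) a
  have h2 : ∀ a b k l, D L (fun c => D L (fun d => T a b c d) l) k = 0 :=
    fun a b k l => D_inj h (fun b => D L (fun c => D L (fun d => T a b c d) l) k)
      (fun i => h1 a i k l) b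
  have h3 : ∀ a b c l, D L (fun d => T a b c d) l = 0 :=
    fun a b c l => D_inj h (fun c => D L (fun d => T a b c d) l)
      (fun i => h2 a b i l) c
  exact D_inj h (fun d => T a b c d) (fun i => h3 a b c i) d

end frame

section covariance

/-- The standard observer. -/
def e0 : Fin 4 → ℝ := fun a => if a = 0 then 1 else 0

variable {L : Fin 4 → Fin 4 → ℝ}

lemma tr4_swap12 (T : Tensor4) (i j k l : Fin 4) :
    tr4 L (fun a b c d => T b a c d) i j k l = tr4 L T j i k l := by
  unfold tr4; rw [D_comm]

lemma tr4_swap34 (T : Tensor4) (i j k l : Fin 4) :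
    tr4 L (fun a b c d => T a b d c) i j k l = tr4 L T i j l k := by
  unfold tr4
  simp only [D_comm L _ k l]

lemma tr4_swap23 (T : Tensor4) (i j k l : Fin 4) :
    tr4 L (fun a b c d => T a c b d) i j k l = tr4 L T i k j l := by
  unfold tr4
  congr 1; funext a
  rw [D_comm]

lemma tr4_cyc (T : Tensor4) (i j k l : Fin 4) :
    tr4 L (fun a b c d => T b c a d) i j k l = tr4 L T j k i l := by
  rw [← tr4_swap23 T j i k l]
  exact tr4_swap12 (fun a b c d => T a c b d) i j k l

lemma tr4_cyc2 (T : Tensor4) (i j k l : Fin 4) :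
    tr4 L (fun a b c d => T c a b d) i j k l = tr4 L T k i j l := by
  rw [← tr4_swap12 T i k j l]
  exact tr4_swap23 (fun a b c d => T b a c d) i j k l

lemma tr4_13 (T : Tensor4) (i j k l : Fin 4) :
    tr4 L (fun a b c d => T c b a d) i j k l = tr4 L T k j i l := by
  rw [← tr4_swap12 T j k i l]
  exact tr4_cyc (fun a b c d => T b a c d) i j k l

lemma tr4_pair (T : Tensor4) (i j k l : Fin 4) :
    tr4 L (fun a b c d => T c d a b) i j k l = tr4 L T k l i j := by
  rw [← tr4_swap23 T k i l j, ← tr4_swap12 _ i k l j, ← tr4_swap34 _ i k j l,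
    ← tr4_swap23 _ i j k l]

lemma tr4_neg (T : Tensor4) (i j k l : Fin 4) :
    tr4 L (fun a b c d => - T a b c d) i j k l = - tr4 L T i j k l := by
  simp only [tr4, D_neg]

lemma weyl_tr4 (h : Fr L) {C : Tensor4} (hC : WeylSymm C) : WeylSymm (tr4 L C) where
  antisymm₁ i j k l := by
    rw [← tr4_swap12, ← tr4_neg]
    congr 1; funext a b c d; exact hC.antisymm₁ b a c d
  antisymm₂ i j k l := by
    rw [← tr4_swap34, ← tr4_neg]
    congr 1; funext a b c d; exact hC.antisymm₂ a b d c
  pairSymm i j k l := by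
    rw [← tr4_pair]
    congr 1; funext a b c d; exact hC.pairSymm c d a b
  firstBianchi i j k l := by
    rw [← tr4_swap12 C i j k l, ← tr4_swap23 C i j k l, ← tr4_cyc C i j k l,
      ← tr4_cyc2 C i j k l, ← tr4_13 C i j k l]
    have : tr4 L (fun a b c d => (1/6 : ℝ) * (C a b c d + C b c a d + C c a b d
      - C b a c d - C a c b d - C c b a d)) i j k l = 0 := by
      simp only [hC.firstBianchi]
      simp [tr4, D]
    simpa only [tr4, D_mul_left, D_add, D_sub] using this
  traceFree j l := by
    have e : ∀ T : Tensor4, ∀ b d, (∑ a, ∑ c, gm a c * T a b c d) = ∑ a, sg a * T a b a d := by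
      intro T b d
      simp [gm_def]
    rw [e]
    have : ∀ i, tr4 L C i j i l =
       D L (fun a => D L (fun c => D L (fun b => D L (fun d => C a b c d) l) j) i) i := by
      intro i
      unfold tr4
      congr 1; funext a
      rw [D_comm]
    simp only [this]
    have key : ∀ X : Fin 4 → Fin 4 → ℝ, ∑ i, sg i * D L (fun a => D L (fun c => X a c) i) i
        = ∑ a, sg a * X a a := by
      intro X
      have e : ∀ i, sg i * D L (fun a => D L (fun c => X a c) i) i
          = ∑ a, ∑ b, (sg i * (L a i * L b i)) * X a b := by
        intro i
        simp only [D, Finset.mul_sum]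
        exact Finset.sum_congr rfl fun _ _ => Finset.sum_congr rfl fun _ _ => by ring
      simp only [e]
      rw [Finset.sum_comm]
      refine Finset.sum_congr rfl fun a _ => ?_
      rw [Finset.sum_comm]
      simp only [← Finset.sum_mul, h.h1, gm_def]
      simp
    rw [key]
    simp only [← D_mul_left, ← D_sum]
    have hh : ∀ b d, ∑ p, sg p * C p b p d = 0 := fun b d => by rw [← e, hC.traceFree]
    simp only [hh]
    simp [D]

lemma lo_cov (h : Fr L) (i : Fin 4) :
    D L (fun a => lo (fun b => L b 0) a) i = lo e0 i := by
  have : ∀ (i : Fin 4), D L (fun a => D L (fun b => gm a b) 0) i = gm i 0 := fun i => h.h2 i 0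
  have e : ∀ a, lo (fun b => L b 0) a = D L (fun b => gm a b) 0 := by
    intro a; simp only [lo, D, mul_comm]
  simp only [e, this]
  simp [lo, e0]

lemma hm_cov (h : Fr L) (i j : Fin 4) :
    D L (fun a => D L (fun b => hm (fun b => L b 0) a b) j) i = hm e0 i j := by
  simp only [hm, D_add, D_mul_left, D_mul_right, lo_cov h, h.h2]

lemma eps_cov (h : Fr L) (i j k : Fin 4) :
    D L (fun a => D L (fun b => D L (fun c => eps (fun b => L b 0) a b c) k) j) i
      = eps e0 i j k := by
  have e : ∀ a b c, eps (fun b => L b 0) a b c = D L (fun d => eta d a b c) 0 := by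
    intro a b c; simp only [eps, D]
  have : eps e0 i j k = eta 0 i j k := by simp [eps, e0]
  rw [this, ← h.h3]
  simp only [e, tr4]
  simp only [D_comm L _ _ 0]

lemma EW_cov (C : Tensor4) (i k : Fin 4) :
    D L (fun a => D L (fun c => EW C (fun b => L b 0) a c) k) i = EW (tr4 L C) e0 i k := by
  have e : ∀ a c, EW C (fun b => L b 0) a c = D L (fun b => D L (fun d => C a b c d) 0) 0 := by
    intro a c
    simp only [EW, D, Finset.mul_sum]
    exact Finset.sum_congr rfl fun _ _ => Finset.sum_congr rfl fun _ _ => by ring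
  have e' : EW (tr4 L C) e0 i k = tr4 L C i 0 k 0 := by simp [EW, e0]
  rw [e']
  simp only [e, tr4]
  congr 1; funext a
  rw [D_comm]

lemma dual_cov (h : Fr L) (C : Tensor4) (i j k l : Fin 4) :
    tr4 L (dualL C) i j k l = dualL (tr4 L C) i j k l := by
  simp only [dualL_eq, tr4, D_mul_left, D_mul_right, D_sum]
  congr 1
  have e1 : ∀ p q, eta i j p q = D L (fun c => D L (fun d =>
      D L (fun a => D L (fun b => eta a b c d) j) i) q) p := by
    intro p q
    rw [← h.h3]
    exact (tr4_pair eta p q i j).symm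
  simp only [e1]
  exact (con2 h (fun c d => D L (fun a => D L (fun b => eta a b c d) j) i)
    (fun a b => D L (fun c => D L (fun d => C a b c d) l) k)).symm

lemma BW_cov (h : Fr L) (C : Tensor4) (i k : Fin 4) :
    D L (fun a => D L (fun c => BW C (fun b => L b 0) a c) k) i = BW (tr4 L C) e0 i k := by
  have := EW_cov (L := L) (dualL C) i k
  have e : tr4 L (dualL C) = dualL (tr4 L C) := by
    funext i j k l; exact dual_cov h C i j k l
  rw [e] at this
  exact this

lemma ct_cov (h : Fr L) (X Y : Fin 4 → Fin 4 → ℝ) (i j : Fin 4) :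
    D L (fun a => D L (fun b => ct X Y a b) j) i
      = ct (fun i j => D L (fun a => D L (fun b => X a b) j) i)
          (fun i j => D L (fun a => D L (fun b => Y a b) j) i) i j := by
  simp only [ct, D_sum, D_mul_left, D_mul_right]
  have := con1 h (fun l => D L (fun a => X a l) i) (fun l => D L (fun b => Y b l) j)
  rw [← this]
  refine Finset.sum_congr rfl fun p _ => ?_
  rw [D_comm L X, D_comm L Y]

lemma W_cov (h : Fr L) (C : Tensor4) : Wse C (fun b => L b 0) = Wse (tr4 L C) e0 := by
  simp only [Wse_eq, ← EW_cov, ← BW_cov h, con2 h]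

lemma P_cov (h : Fr L) (C : Tensor4) (i : Fin 4) :
    D L (fun a => Pse C (fun b => L b 0) a) i = Pse (tr4 L C) e0 i := by
  simp only [Pse_eq, D_sum, D_mul_left]
  refine congrArg (fun z => 2 * z) ?_
  have e1 : ∀ p q, ct (BW (tr4 L C) e0) (EW (tr4 L C) e0) p q =
     D L (fun a => D L (fun b => ct (BW C (fun b => L b 0)) (EW C (fun b => L b 0)) a b) q) p := by
    intro p q
    rw [ct_cov h]
    simp only [EW_cov, BW_cov h]
  have e2 : ∀ p q, eps e0 i p q = D L (fun b => D L (fun c => D L (fun a =>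
      eps (fun b => L b 0) a b c) i) q) p := by
    intro p q
    rw [← eps_cov h]
    rw [D_comm]
    congr 1; funext b
    rw [D_comm]
  simp only [e1, e2]
  rw [con2 h]

lemma t_cov (h : Fr L) (C : Tensor4) (i j : Fin 4) :
    D L (fun a => D L (fun b => tse C (fun b => L b 0) a b) j) i = tse (tr4 L C) e0 i j := by
  simp only [tse_eq, D_sub, D_add, D_mul_left, D_mul_right, hm_cov h, W_cov h, ct_cov h,
    BW_cov h, EW_cov]

lemma J_cov (h : Fr L) (C : Tensor4) (i j k : Fin 4) :
    D L (fun a => D L (fun b => D L (fun c => J C (fun b => L b 0) a b c) k) j) i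
      = J (tr4 L C) e0 i j k := by
  simp only [J, D_sum, D_mul_left, D_mul_right]
  have e1 : ∀ p q, BW (tr4 L C) e0 j p * EW (tr4 L C) e0 i q =
     D L (fun a => D L (fun b => D L (fun c => BW C (fun b => L b 0) c a) j *
        D L (fun c => EW C (fun b => L b 0) c b) i) q) p := by
    intro p q
    rw [← EW_cov, ← BW_cov h]
    simp only [D_mul_left, D_mul_right]
    congr 1
    · rw [D_comm]
    · rw [D_comm]
  have e2 : ∀ p q, eps e0 k p q = D L (fun b => D L (fun c => D L (fun a =>
      eps (fun b => L b 0) a b c) k) q) p := by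
    intro p q
    rw [← eps_cov h]
    rw [D_comm]
    congr 1; funext b
    rw [D_comm]
  simp only [e1, e2]
  rw [con2 h]

lemma Q_cov (h : Fr L) (C : Tensor4) (i j k : Fin 4) :
    D L (fun a => D L (fun b => D L (fun c => Qse C (fun b => L b 0) a b c) k) j) i
      = Qse (tr4 L C) e0 i j k := by
  have hJ : D L (fun a => D L (fun b => D L (fun c => J C (fun b => L b 0) b a c) k) j) i
      = J (tr4 L C) e0 j i k := by
    rw [D_comm, J_cov h]
  simp only [Qse_eq, D_sub, D_add, D_mul_left, D_mul_right, hm_cov h, P_cov h, J_cov h, hJ]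

lemma K_cov (h : Fr L) (C : Tensor4) (i j k l : Fin 4) :
    tr4 L (K C) i j k l = K (tr4 L C) i j k l := by
  simp only [K, tr4, D_sum, D_mul_left, D_mul_right]
  have e : ∀ i l p q, D L (fun a => D L (fun b => D L (fun c => D L (fun d => C a b c d) q) l) p) i
    = D L (fun b => D L (fun d => D L (fun a => D L (fun c => C a b c d) l) i) q) p := by
    intro i l p q
    rw [D_comm]
    congr 1; funext b
    have e2 : ∀ a, D L (fun c => D L (fun d => C a b c d) q) l
        = D L (fun d => D L (fun c => C a b c d) l) q := fun a => D_comm L _ _ _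
    simp only [e2]
    rw [D_comm]
  simp only [e]
  rw [con2 h]

lemma q4_cov (h : Fr L) (C : Tensor4) : q4 C C = q4 (tr4 L C) (tr4 L C) := by
  have e : ∀ i j k l, tr4 L C i j k l = D L (fun c => D L (fun d =>
      D L (fun a => D L (fun b => C a b c d) j) i) l) k :=
    fun i j k l => (tr4_pair C k l i j).symm
  have sw : ∀ F : Tensor4, ∑ e, ∑ f, sg e * (sg f * ∑ p, ∑ h, sg p * (sg h * F e f p h))
      = ∑ p, ∑ h, sg p * (sg h * ∑ e, ∑ f, sg e * (sg f * F e f p h)) := by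
    intro F
    simp only [Fin.sum_univ_four]
    ring
  simp only [q4_eq, e]
  simp only [con2 h]
  conv_rhs => rw [sw]
  simp only [con2 h]
  rw [sw]

end covariance

section final
variable {L : Fin 4 → Fin 4 → ℝ}

/-- The splitting for a given tensor, observer and indices. -/
def Goal (C : Tensor4) (n : Fin 4 → ℝ) (a b c d : Fin 4) : ℝ :=
  K C a b c d + K C a b d c - (1/8) * gm a b * gm c d * q4 C C -
        (Wse C n * lo n a * lo n b * lo n c * lo n d
        + 4 * sym4 (fun x y z w => Pse C n x * lo n y * lo n z * lo n w) a b c d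
        + 6 * sym4 (fun x y z w => tse C n x y * lo n z * lo n w) a b c d
        + 4 * sym4 (fun x y z w => Qse C n x y z * lo n w) a b c d
        + tse4 C n a b c d)

lemma gm_cov' (h : Fr L) (i j : Fin 4) :
    D L (fun a => D L (fun b => gm b a) j) i = gm j i := by rw [D_comm, h.h2]
lemma hm_cov' (h : Fr L) (i j : Fin 4) :
    D L (fun a => D L (fun b => hm (fun b => L b 0) b a) j) i = hm e0 j i := by
  rw [D_comm, hm_cov h]
lemma t_cov' (h : Fr L) (C : Tensor4) (i j : Fin 4) :
    D L (fun a => D L (fun b => tse C (fun b => L b 0) b a) j) i = tse (tr4 L C) e0 j i := by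
  rw [D_comm, t_cov h]
lemma Q_cov1 (h : Fr L) (C : Tensor4) (i j k : Fin 4) :
    D L (fun a => D L (fun b => D L (fun c => Qse C (fun b => L b 0) b a c) k) j) i
      = Qse (tr4 L C) e0 j i k := by
  rw [D_comm, Q_cov h]
lemma Q_cov2 (h : Fr L) (C : Tensor4) (i j k : Fin 4) :
    D L (fun a => D L (fun b => D L (fun c => Qse C (fun b => L b 0) a c b) k) j) i
      = Qse (tr4 L C) e0 i k j := by
  rw [← Q_cov h]; congr 1; funext a; rw [D_comm]
lemma Q_cov3 (h : Fr L) (C : Tensor4) (i j k : Fin 4) :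
    D L (fun a => D L (fun b => D L (fun c => Qse C (fun b => L b 0) c a b) k) j) i
      = Qse (tr4 L C) e0 k i j := by
  rw [← Q_cov1 h]; congr 1; funext a; rw [D_comm]
lemma Q_cov4 (h : Fr L) (C : Tensor4) (i j k : Fin 4) :
    D L (fun a => D L (fun b => D L (fun c => Qse C (fun b => L b 0) b c a) k) j) i
      = Qse (tr4 L C) e0 j k i := by
  rw [D_comm, Q_cov2 h]
lemma Q_cov5 (h : Fr L) (C : Tensor4) (i j k : Fin 4) :
    D L (fun a => D L (fun b => D L (fun c => Qse C (fun b => L b 0) c b a) k) j) i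
      = Qse (tr4 L C) e0 k j i := by
  rw [D_comm, Q_cov3 h]

lemma K_cov' (h : Fr L) (C : Tensor4) (i j k l : Fin 4) :
    D L (fun a => D L (fun b => D L (fun c => D L (fun d => K C a b c d) l) k) j) i
     = K (tr4 L C) i j k l := K_cov h C i j k l
lemma K_cov'' (h : Fr L) (C : Tensor4) (i j k l : Fin 4) :
    D L (fun a => D L (fun b => D L (fun c => D L (fun d => K C a b d c) l) k) j) i
     = K (tr4 L C) i j l k := by
  rw [← K_cov h]; exact tr4_swap34 (K C) i j k l

lemma Goal_cov (h : Fr L) (C : Tensor4) (i j k l : Fin 4) :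
    tr4 L (Goal C (fun b => L b 0)) i j k l = Goal (tr4 L C) e0 i j k l := by
  have e : tr4 L (Goal C (fun b => L b 0)) i j k l = D L (fun a => D L (fun b => D L (fun c =>
      D L (fun d => Goal C (fun b => L b 0) a b c d) l) k) j) i := rfl
  rw [e]
  simp only [Goal, sym4_eq, tse4, D_add, D_sub, D_mul_left, D_mul_right,
    lo_cov h, P_cov h, t_cov h, t_cov' h, Q_cov h, Q_cov1 h, Q_cov2 h, Q_cov3 h, Q_cov4 h,
    Q_cov5 h, hm_cov h, hm_cov' h, h.h2, gm_cov' h, K_cov' h, K_cov'' h, W_cov h, ← q4_cov h,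
    EW_cov, BW_cov h]

end final

/-- Explicit components of a Weyl tensor in an orthonormal frame. -/
structure Cmp (C : Tensor4) (x1 x2 x3 x4 x5 y1 y2 y3 y4 y5 : ℝ) : Prop where
  z1 : ∀ a c d, C a a c d = 0
  z2 : ∀ a b c, C a b c c = 0
  l10 : ∀ c d, C 1 0 c d = - C 0 1 c d
  r10 : ∀ c d, C c d 1 0 = - C c d 0 1
  l20 : ∀ c d, C 2 0 c d = - C 0 2 c d
  r20 : ∀ c d, C c d 2 0 = - C c d 0 2
  l30 : ∀ c d, C 3 0 c d = - C 0 3 c d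
  r30 : ∀ c d, C c d 3 0 = - C c d 0 3
  l32 : ∀ c d, C 3 2 c d = - C 2 3 c d
  r32 : ∀ c d, C c d 3 2 = - C c d 2 3
  l13 : ∀ c d, C 1 3 c d = - C 3 1 c d
  r13 : ∀ c d, C c d 1 3 = - C c d 3 1
  l21 : ∀ c d, C 2 1 c d = - C 1 2 c d
  r21 : ∀ c d, C c d 2 1 = - C c d 1 2
  c0101 : C 0 1 0 1 = x1
  c0102 : C 0 1 0 2 = x2
  c0103 : C 0 1 0 3 = x3
  c0123 : C 0 1 2 3 = y1
  c0131 : C 0 1 3 1 = y2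
  c0112 : C 0 1 1 2 = y3
  c0201 : C 0 2 0 1 = x2
  c0202 : C 0 2 0 2 = x4
  c0203 : C 0 2 0 3 = x5
  c0223 : C 0 2 2 3 = y2
  c0231 : C 0 2 3 1 = y4
  c0212 : C 0 2 1 2 = y5
  c0301 : C 0 3 0 1 = x3
  c0302 : C 0 3 0 2 = x5
  c0303 : C 0 3 0 3 = (-x1 - x4)
  c0323 : C 0 3 2 3 = y3
  c0331 : C 0 3 3 1 = y5
  c0312 : C 0 3 1 2 = (-y1 - y4)
  c2301 : C 2 3 0 1 = y1
  c2302 : C 2 3 0 2 = y2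
  c2303 : C 2 3 0 3 = y3
  c2323 : C 2 3 2 3 = -x1
  c2331 : C 2 3 3 1 = -x2
  c2312 : C 2 3 1 2 = -x3
  c3101 : C 3 1 0 1 = y2
  c3102 : C 3 1 0 2 = y4
  c3103 : C 3 1 0 3 = y5
  c3123 : C 3 1 2 3 = -x2
  c3131 : C 3 1 3 1 = -x4
  c3112 : C 3 1 1 2 = -x5
  c1201 : C 1 2 0 1 = y3
  c1202 : C 1 2 0 2 = y5
  c1203 : C 1 2 0 3 = (-y1 - y4)
  c1223 : C 1 2 2 3 = -x3
  c1231 : C 1 2 3 1 = -x5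
  c1212 : C 1 2 1 2 = -(-x1 - x4)

lemma exists_Cmp {C : Tensor4} (hC : WeylSymm C) : ∃ x1 x2 x3 x4 x5 y1 y2 y3 y4 y5,
    Cmp C x1 x2 x3 x4 x5 y1 y2 y3 y4 y5 := by
  have a1 := hC.antisymm₁
  have a2 := hC.antisymm₂
  have pr := hC.pairSymm
  have bi := hC.firstBianchi 1 2 3 0
  have e : ∀ b d, ∑ a, sg a * C a b a d = 0 := by
    intro b d
    rw [← hC.traceFree b d]
    simp [gm_def]
  simp only [Fin.sum_univ_four] at e
  have s0 : sg 0 = -1 := by simp [sg]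
  have s1 : sg 1 = 1 := by simp [sg]
  have s2 : sg 2 = 1 := by simp [sg]
  have s3 : sg 3 = 1 := by simp [sg]
  simp only [s0, s1, s2, s3, one_mul] at e
  have z1 : ∀ a c d, C a a c d = 0 := fun a c d => by linarith [a1 a a c d]
  have z2 : ∀ a b c, C a b c c = 0 := fun a b c => by linarith [a2 a b c c]
  have l10 : ∀ c d, C 1 0 c d = - C 0 1 c d := fun c d => a1 1 0 c d
  have r10 : ∀ c d, C c d 1 0 = - C c d 0 1 := fun c d => a2 c d 1 0
  have l20 : ∀ c d, C 2 0 c d = - C 0 2 c d := fun c d => a1 2 0 c d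
  have r20 : ∀ c d, C c d 2 0 = - C c d 0 2 := fun c d => a2 c d 2 0
  have l30 : ∀ c d, C 3 0 c d = - C 0 3 c d := fun c d => a1 3 0 c d
  have r30 : ∀ c d, C c d 3 0 = - C c d 0 3 := fun c d => a2 c d 3 0
  have l32 : ∀ c d, C 3 2 c d = - C 2 3 c d := fun c d => a1 3 2 c d
  have r32 : ∀ c d, C c d 3 2 = - C c d 2 3 := fun c d => a2 c d 3 2
  have l13 : ∀ c d, C 1 3 c d = - C 3 1 c d := fun c d => a1 1 3 c d
  have r13 : ∀ c d, C c d 1 3 = - C c d 3 1 := fun c d => a2 c d 1 3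
  have l21 : ∀ c d, C 2 1 c d = - C 1 2 c d := fun c d => a1 2 1 c d
  have r21 : ∀ c d, C c d 2 1 = - C c d 1 2 := fun c d => a2 c d 2 1
  have e00 := e 0 0
  have e01 := e 0 1
  have e02 := e 0 2
  have e03 := e 0 3
  have e11 := e 1 1
  have e12 := e 1 2
  have e13 := e 1 3
  have e22 := e 2 2
  have e23 := e 2 3
  have e33 := e 3 3
  have p0201 := pr 0 2 0 1
  have p0301 := pr 0 3 0 1
  have p0302 := pr 0 3 0 2
  have p2301 := pr 2 3 0 1
  have p2302 := pr 2 3 0 2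
  have p2303 := pr 2 3 0 3
  have p3101 := pr 3 1 0 1
  have p3102 := pr 3 1 0 2
  have p3103 := pr 3 1 0 3
  have p3123 := pr 3 1 2 3
  have p1201 := pr 1 2 0 1
  have p1202 := pr 1 2 0 2
  have p1203 := pr 1 2 0 3
  have p1223 := pr 1 2 2 3
  have p1231 := pr 1 2 3 1
  simp only [z1, z2, l10, r10, l20, r20, l30, r30, l32, r32, l13, r13, l21, r21] at bi e00 e01 e02 e03 e11 e12 e13 e22 e23 e33
  refine ⟨C 0 1 0 1, C 0 1 0 2, C 0 1 0 3, C 0 2 0 2, C 0 2 0 3,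
    C 0 1 2 3, C 0 1 3 1, C 0 1 1 2, C 0 2 3 1, C 0 2 1 2, z1, z2, l10, r10, l20, r20, l30, r30, l32, r32, l13, r13, l21, r21,
    ?_, ?_, ?_, ?_, ?_, ?_, ?_, ?_, ?_, ?_, ?_, ?_, ?_, ?_, ?_, ?_, ?_, ?_, ?_, ?_, ?_, ?_, ?_, ?_, ?_, ?_, ?_, ?_, ?_, ?_, ?_, ?_, ?_, ?_, ?_, ?_⟩ <;> linarith

lemma sg_0 : sg 0 = -1 := by simp [sg]
lemma sg_1 : sg 1 = 1 := by simp [sg]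
lemma sg_2 : sg 2 = 1 := by simp [sg]
lemma sg_3 : sg 3 = 1 := by simp [sg]
lemma lo_0 : lo e0 0 = -1 := by simp [lo_eq, e0, sg]
lemma lo_1 : lo e0 1 = 0 := by simp [lo_eq, e0]
lemma lo_2 : lo e0 2 = 0 := by simp [lo_eq, e0]
lemma lo_3 : lo e0 3 = 0 := by simp [lo_eq, e0]
lemma eps_val (a b c : Fin 4) : eps e0 a b c = eta 0 a b c := by simp [eps, e0]
lemma EW_val (C : Tensor4) (a b : Fin 4) : EW C e0 a b = C a 0 b 0 := by simp [EW, e0]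
lemma BW_val (C : Tensor4) (a b : Fin 4) : BW C e0 a b = dualL C a 0 b 0 := by simp [BW, e0]

/-- Components of the electric and magnetic parts in the rest frame. -/
structure EBv (E B : Fin 4 → Fin 4 → ℝ) (x1 x2 x3 x4 x5 y1 y2 y3 y4 y5 : ℝ) : Prop where
  E0l : ∀ a, E 0 a = 0
  E0r : ∀ a, E a 0 = 0
  B0l : ∀ a, B 0 a = 0
  B0r : ∀ a, B a 0 = 0
  E11 : E 1 1 = x1
  E12 : E 1 2 = x2
  E13 : E 1 3 = x3
  E21 : E 2 1 = x2
  E22 : E 2 2 = x4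
  E23 : E 2 3 = x5
  E31 : E 3 1 = x3
  E32 : E 3 2 = x5
  E33 : E 3 3 = -x1 - x4
  B11 : B 1 1 = y1
  B12 : B 1 2 = y2
  B13 : B 1 3 = y3
  B21 : B 2 1 = y2
  B22 : B 2 2 = y4
  B23 : B 2 3 = y5
  B31 : B 3 1 = y3
  B32 : B 3 2 = y5
  B33 : B 3 3 = -y1 - y4

lemma forall4 {P : Fin 4 → Prop} (h0 : P 0) (h1 : P 1) (h2 : P 2) (h3 : P 3) : ∀ a, P a := by
  intro a; fin_cases a <;> assumption

lemma sign_two : Int.sign 2 = 1 := rfl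
lemma sign_three : Int.sign 3 = 1 := rfl

lemma eta_0l (a b : Fin 4) : eta 0 0 a b = 0 := by simp [eta]
lemma BW_sum (C : Tensor4) (a b : Fin 4) : BW C e0 a b =
    (1/2) * ∑ p, ∑ q, sg p * (sg q * (eta a 0 p q * C p q b 0)) := by
  rw [BW_val, dualL_eq]

lemma EB_of {C : Tensor4} {x1 x2 x3 x4 x5 y1 y2 y3 y4 y5 : ℝ} (h : Cmp C x1 x2 x3 x4 x5 y1 y2 y3 y4 y5) : EBv (EW C e0) (BW C e0) x1 x2 x3 x4 x5 y1 y2 y3 y4 y5 := by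
  constructor
  · refine forall4 ?_ ?_ ?_ ?_ <;> simp only [EW_val, h.z1, h.z2, h.l10, h.r10, h.l20, h.r20, h.l30, h.r30, h.l32, h.r32, h.l13, h.r13, h.l21, h.r21, h.c0101, h.c0102, h.c0103, h.c0123, h.c0131, h.c0112, h.c0201, h.c0202, h.c0203, h.c0223, h.c0231, h.c0212, h.c0301, h.c0302, h.c0303, h.c0323, h.c0331, h.c0312, h.c2301, h.c2302, h.c2303, h.c2323, h.c2331, h.c2312, h.c3101, h.c3102, h.c3103, h.c3123, h.c3131, h.c3112, h.c1201, h.c1202, h.c1203, h.c1223, h.c1231, h.c1212]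
  · refine forall4 ?_ ?_ ?_ ?_ <;> simp only [EW_val, h.z1, h.z2, h.l10, h.r10, h.l20, h.r20, h.l30, h.r30, h.l32, h.r32, h.l13, h.r13, h.l21, h.r21, h.c0101, h.c0102, h.c0103, h.c0123, h.c0131, h.c0112, h.c0201, h.c0202, h.c0203, h.c0223, h.c0231, h.c0212, h.c0301, h.c0302, h.c0303, h.c0323, h.c0331, h.c0312, h.c2301, h.c2302, h.c2303, h.c2323, h.c2331, h.c2312, h.c3101, h.c3102, h.c3103, h.c3123, h.c3131, h.c3112, h.c1201, h.c1202, h.c1203, h.c1223, h.c1231, h.c1212]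
  · intro a; simp [BW_sum, eta]
  · intro a; simp [BW_sum, h.z2]
  all_goals
    first
    | (simp only [EW_val, h.z1, h.z2, h.l10, h.r10, h.l20, h.r20, h.l30, h.r30, h.l32, h.r32, h.l13, h.r13, h.l21, h.r21, h.c0101, h.c0102, h.c0103, h.c0123, h.c0131, h.c0112, h.c0201, h.c0202, h.c0203, h.c0223, h.c0231, h.c0212, h.c0301, h.c0302, h.c0303, h.c0323, h.c0331, h.c0312, h.c2301, h.c2302, h.c2303, h.c2323, h.c2331, h.c2312, h.c3101, h.c3102, h.c3103, h.c3123, h.c3131, h.c3112, h.c1201, h.c1202, h.c1203, h.c1223, h.c1231, h.c1212]; ring)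
    | (simp [BW_sum, Fin.sum_univ_four, eta, sign_two, sign_three, sg_0, sg_1, sg_2, sg_3, h.z1, h.z2, h.l10, h.r10, h.l20, h.r20, h.l30, h.r30, h.l32, h.r32, h.l13, h.r13, h.l21, h.r21, h.c0101, h.c0102, h.c0103, h.c0123, h.c0131, h.c0112, h.c0201, h.c0202, h.c0203, h.c0223, h.c0231, h.c0212, h.c0301, h.c0302, h.c0303, h.c0323, h.c0331, h.c0312, h.c2301, h.c2302, h.c2303, h.c2323, h.c2331, h.c2312, h.c3101, h.c3102, h.c3103, h.c3123, h.c3131, h.c3112, h.c1201, h.c1202, h.c1203, h.c1223, h.c1231, h.c1212]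
       try ring)

set_option maxHeartbeats 4000000 in
lemma q4_m {C : Tensor4} {x1 x2 x3 x4 x5 y1 y2 y3 y4 y5 : ℝ} (h : Cmp C x1 x2 x3 x4 x5 y1 y2 y3 y4 y5) : q4 C C = 8 * (x1^2+x4^2+(x1+x4)^2+2*x2^2+2*x3^2+2*x5^2)
   - 8 * (y1^2+y4^2+(y1+y4)^2+2*y2^2+2*y3^2+2*y5^2) := by
  rw [q4_eq]
  simp only [Fin.sum_univ_four, sg_0, sg_1, sg_2, sg_3, h.z1, h.z2, h.l10, h.r10, h.l20, h.r20, h.l30, h.r30, h.l32, h.r32, h.l13, h.r13, h.l21, h.r21, h.c0101, h.c0102, h.c0103, h.c0123, h.c0131, h.c0112, h.c0201, h.c0202, h.c0203, h.c0223, h.c0231, h.c0212, h.c0301, h.c0302, h.c0303, h.c0323, h.c0331, h.c0312, h.c2301, h.c2302, h.c2303, h.c2323, h.c2331, h.c2312, h.c3101, h.c3102, h.c3103, h.c3123, h.c3131, h.c3112, h.c1201, h.c1202, h.c1203, h.c1223, h.c1231, h.c1212]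
  ring


section rest
variable {C : Tensor4} {x1 x2 x3 x4 x5 y1 y2 y3 y4 y5 : ℝ} (h : Cmp C x1 x2 x3 x4 x5 y1 y2 y3 y4 y5)

lemma ct_sp (X Y : Fin 4 → Fin 4 → ℝ) (hX : ∀ a, X a 0 = 0) (a b : Fin 4) :
    ct X Y a b = X a 1 * Y b 1 + X a 2 * Y b 2 + X a 3 * Y b 3 := by
  simp [ct, Fin.sum_univ_four, hX, sg_1, sg_2, sg_3]

/-- Spatial contraction with the volume form. -/
lemma eps_con (F : Fin 4 → Fin 4 → ℝ) :
    (∑ p, ∑ q, sg p * (sg q * (F p q * eps e0 0 p q)) = 0) ∧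
    (∑ p, ∑ q, sg p * (sg q * (F p q * eps e0 1 p q)) = F 2 3 - F 3 2) ∧
    (∑ p, ∑ q, sg p * (sg q * (F p q * eps e0 2 p q)) = F 3 1 - F 1 3) ∧
    (∑ p, ∑ q, sg p * (sg q * (F p q * eps e0 3 p q)) = F 1 2 - F 2 1) := by
  refine ⟨?_, ?_, ?_, ?_⟩ <;>
  simp [eps_val, Fin.sum_univ_four, eta, sign_two, sign_three, sg_0, sg_1, sg_2, sg_3] <;> ring

lemma J_0 (c d : Fin 4) : J C e0 c d 0 = 0 := (eps_con _).1
lemma J_1 (c d : Fin 4) : J C e0 c d 1 =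
    BW C e0 d 2 * EW C e0 c 3 - BW C e0 d 3 * EW C e0 c 2 :=
  (eps_con fun p q => BW C e0 d p * EW C e0 c q).2.1
lemma J_2 (c d : Fin 4) : J C e0 c d 2 =
    BW C e0 d 3 * EW C e0 c 1 - BW C e0 d 1 * EW C e0 c 3 :=
  (eps_con fun p q => BW C e0 d p * EW C e0 c q).2.2.1
lemma J_3 (c d : Fin 4) : J C e0 c d 3 =
    BW C e0 d 1 * EW C e0 c 2 - BW C e0 d 2 * EW C e0 c 1 :=
  (eps_con fun p q => BW C e0 d p * EW C e0 c q).2.2.2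
lemma P_0 : Pse C e0 0 = 0 := by rw [Pse_eq, (eps_con _).1]; ring
lemma P_1 : Pse C e0 1 =
    2 * (ct (BW C e0) (EW C e0) 2 3 - ct (BW C e0) (EW C e0) 3 2) := by
  rw [Pse_eq, (eps_con _).2.1]
lemma P_2 : Pse C e0 2 =
    2 * (ct (BW C e0) (EW C e0) 3 1 - ct (BW C e0) (EW C e0) 1 3) := by
  rw [Pse_eq, (eps_con _).2.2.1]
lemma P_3 : Pse C e0 3 =
    2 * (ct (BW C e0) (EW C e0) 1 2 - ct (BW C e0) (EW C e0) 2 1) := by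
  rw [Pse_eq, (eps_con _).2.2.2]

lemma W_m (h : EBv (EW C e0) (BW C e0) x1 x2 x3 x4 x5 y1 y2 y3 y4 y5) :
    Wse C e0 = (x1^2+x4^2+(x1+x4)^2+2*x2^2+2*x3^2+2*x5^2)
   + (y1^2+y4^2+(y1+y4)^2+2*y2^2+2*y3^2+2*y5^2) := by
  rw [Wse_eq]
  simp only [Fin.sum_univ_four, sg_0, sg_1, sg_2, sg_3, h.E0l, h.E0r, h.B0l, h.B0r, h.E11, h.E12,
    h.E13, h.E21, h.E22, h.E23, h.E31, h.E32, h.E33, h.B11, h.B12,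
    h.B13, h.B21, h.B22, h.B23, h.B31, h.B32, h.B33]
  ring

end rest

lemma gm_0 : gm 0 0 = -1 := by simp [gm]
lemma gm_s (a : Fin 3) : gm a.succ a.succ = 1 := by simp [gm]
lemma gm_1 : gm 1 1 = 1 := gm_s 0
lemma gm_2 : gm 2 2 = 1 := gm_s 1
lemma gm_3 : gm 3 3 = 1 := gm_s 2
lemma gm_ne {a b : Fin 4} (h : a ≠ b) : gm a b = 0 := by simp [gm, h]
lemma hm_0l (a : Fin 4) : hm e0 0 a = 0 := by
  fin_cases a <;> simp [hm, gm, lo_eq, e0, sg]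
lemma hm_0r (a : Fin 4) : hm e0 a 0 = 0 := by
  fin_cases a <;> simp [hm, gm, lo_eq, e0, sg]
lemma hm_1 (b : Fin 4) : hm e0 1 b = gm 1 b := by simp [hm, lo_eq, e0]
lemma hm_2 (b : Fin 4) : hm e0 2 b = gm 2 b := by simp [hm, lo_eq, e0]
lemma hm_3 (b : Fin 4) : hm e0 3 b = gm 3 b := by simp [hm, lo_eq, e0]
lemma g01 : gm 0 1 = 0 := gm_ne (by decide)
lemma g02 : gm 0 2 = 0 := gm_ne (by decide)
lemma g03 : gm 0 3 = 0 := gm_ne (by decide)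
lemma g10 : gm 1 0 = 0 := gm_ne (by decide)
lemma g12 : gm 1 2 = 0 := gm_ne (by decide)
lemma g13 : gm 1 3 = 0 := gm_ne (by decide)
lemma g20 : gm 2 0 = 0 := gm_ne (by decide)
lemma g21 : gm 2 1 = 0 := gm_ne (by decide)
lemma g23 : gm 2 3 = 0 := gm_ne (by decide)
lemma g30 : gm 3 0 = 0 := gm_ne (by decide)
lemma g31 : gm 3 1 = 0 := gm_ne (by decide)
lemma g32 : gm 3 2 = 0 := gm_ne (by decide)

set_option maxHeartbeats 40000000 in
lemma core {C : Tensor4} {x1 x2 x3 x4 x5 y1 y2 y3 y4 y5 : ℝ} (h : Cmp C x1 x2 x3 x4 x5 y1 y2 y3 y4 y5) (h' : EBv (EW C e0) (BW C e0) x1 x2 x3 x4 x5 y1 y2 y3 y4 y5) : ∀ a b c d, Goal C e0 a b c d = 0 := by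
  refine forall4 ?_ ?_ ?_ ?_ <;> refine forall4 ?_ ?_ ?_ ?_ <;>
    refine forall4 ?_ ?_ ?_ ?_ <;> refine forall4 ?_ ?_ ?_ ?_
  all_goals
    simp only [Goal, sym4_eq, lo_0, lo_1, lo_2, lo_3, mul_zero, zero_mul, add_zero, zero_add,
      mul_one, mul_neg, neg_neg, neg_zero, tse4]
    simp only [Qse_eq, tse_eq, P_0, P_1, P_2, P_3, J_0, J_1, J_2, J_3, hm_0l, hm_0r, hm_1, hm_2,
      hm_3, gm_0, gm_1, gm_2, gm_3, g01, g02, g03, g10, g12, g13, g20, g21, g23, g30, g31, g32,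
      ct_sp _ _ h'.E0r, ct_sp _ _ h'.B0r, W_m h', q4_m h, K, Fin.sum_univ_four,
      sg_0, sg_1, sg_2, sg_3, mul_zero, zero_mul, add_zero, zero_add, mul_one, one_mul,
      h'.E0l, h'.E0r, h'.B0l, h'.B0r, h'.E11, h'.E12,
      h'.E13, h'.E21, h'.E22, h'.E23, h'.E31, h'.E32, h'.E33, h'.B11, h'.B12,
      h'.B13, h'.B21, h'.B22, h'.B23, h'.B31, h'.B32, h'.B33,
      h.z1, h.z2, h.l10, h.r10, h.l20, h.r20, h.l30, h.r30, h.l32, h.r32, h.l13, h.r13, h.l21, h.r21, h.c0101, h.c0102, h.c0103, h.c0123, h.c0131, h.c0112, h.c0201, h.c0202, h.c0203, h.c0223, h.c0231, h.c0212, h.c0301, h.c0302, h.c0303, h.c0323, h.c0331, h.c0312, h.c2301, h.c2302, h.c2303, h.c2323, h.c2331, h.c2312, h.c3101, h.c3102, h.c3103, h.c3123, h.c3131, h.c3112, h.c1201, h.c1202, h.c1203, h.c1223, h.c1231, h.c1212]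
    ring

section boost

/-- Determinant of four columns of `L`. -/
def dt (L : Fin 4 → Fin 4 → ℝ) (i j k l : Fin 4) : ℝ :=
      L 0 i * L 1 j * L 2 k * L 3 l - L 0 i * L 1 j * L 3 k * L 2 l - L 0 i * L 2 j * L 1 k *
      L 3 l + L 0 i * L 2 j * L 3 k * L 1 l + L 0 i * L 3 j * L 1 k * L 2 l - L 0 i * L 3 j *
      L 2 k * L 1 l - L 1 i * L 0 j * L 2 k * L 3 l + L 1 i * L 0 j * L 3 k * L 2 l + L 1 i *
      L 2 j * L 0 k * L 3 l - L 1 i * L 2 j * L 3 k * L 0 l - L 1 i * L 3 j * L 0 k * L 2 l +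
      L 1 i * L 3 j * L 2 k * L 0 l + L 2 i * L 0 j * L 1 k * L 3 l - L 2 i * L 0 j * L 3 k *
      L 1 l - L 2 i * L 1 j * L 0 k * L 3 l + L 2 i * L 1 j * L 3 k * L 0 l + L 2 i * L 3 j *
      L 0 k * L 1 l - L 2 i * L 3 j * L 1 k * L 0 l - L 3 i * L 0 j * L 1 k * L 2 l + L 3 i *
      L 0 j * L 2 k * L 1 l + L 3 i * L 1 j * L 0 k * L 2 l - L 3 i * L 1 j * L 2 k * L 0 l -
      L 3 i * L 2 j * L 0 k * L 1 l + L 3 i * L 2 j * L 1 k * L 0 l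

lemma tr4_eta (L : Fin 4 → Fin 4 → ℝ) (i j k l : Fin 4) : tr4 L eta i j k l = dt L i j k l := by
  simp only [tr4, D, Fin.sum_univ_four, dt]
  simp [eta, sign_two, sign_three]
  ring

set_option maxHeartbeats 40000000 in
lemma dt_eta (L : Fin 4 → Fin 4 → ℝ) : ∀ i j k l, dt L i j k l = dt L 0 1 2 3 * eta i j k l := by
  refine forall4 ?_ ?_ ?_ ?_ <;> refine forall4 ?_ ?_ ?_ ?_ <;>
    refine forall4 ?_ ?_ ?_ ?_ <;> refine forall4 ?_ ?_ ?_ ?_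
  all_goals
    simp only [dt]
    simp [eta, sign_two, sign_three]
    try ring

/-- The boost taking the standard observer to `(g, u, v, w)`, with `k = 1 / (1 + g)`. -/
def bst (g u v w k : ℝ) : Fin 4 → Fin 4 → ℝ :=
  ![![g, u, v, w], ![u, 1 + k * u * u, k * u * v, k * u * w],
    ![v, k * v * u, 1 + k * v * v, k * v * w], ![w, k * w * u, k * w * v, 1 + k * w * w]]

lemma Fr_bst (g u v w k : ℝ) (h1 : k * (u^2 + v^2 + w^2) = g - 1) (h2 : k * g = 1 - k)
    (h3 : u^2 + v^2 + w^2 = g^2 - 1) : Fr (bst g u v w k) where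
  h1 := by
    have m : ∀ x y : ℝ, -(x * y) + 2 * (k * x * y) + k * x * y * (k * (u^2+v^2+w^2)) = 0 := by
      intro x y
      rw [h1]; linear_combination (x * y) * h2
    have m' : ∀ x : ℝ, -(g * x) + x + x * (k * (u^2+v^2+w^2)) = 0 := by
      intro x; rw [h1]; ring
    refine forall4 ?_ ?_ ?_ ?_ <;> refine forall4 ?_ ?_ ?_ ?_
    all_goals
      simp [Fin.sum_univ_four, sg_0, sg_1, sg_2, sg_3, bst, gm]
      first
      | linear_combination h3
      | linear_combination m' u
      | linear_combination m' v
      | linear_combination m' w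
      | linear_combination m u u
      | linear_combination m u v
      | linear_combination m u w
      | linear_combination m v v
      | linear_combination m v w
      | linear_combination m w w
  h2 := by
    have m : ∀ x y : ℝ, -(x * y) + 2 * (k * x * y) + k * x * y * (k * (u^2+v^2+w^2)) = 0 := by
      intro x y
      rw [h1]; linear_combination (x * y) * h2
    have m' : ∀ x : ℝ, -(g * x) + x + x * (k * (u^2+v^2+w^2)) = 0 := by
      intro x; rw [h1]; ring
    refine forall4 ?_ ?_ ?_ ?_ <;> refine forall4 ?_ ?_ ?_ ?_
    all_goals
      simp [D, Fin.sum_univ_four, bst, gm]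
      first
      | linear_combination h3
      | linear_combination m' u
      | linear_combination m' v
      | linear_combination m' w
      | linear_combination m u u
      | linear_combination m u v
      | linear_combination m u w
      | linear_combination m v v
      | linear_combination m v w
      | linear_combination m w w
  h3 := by
    have hd : dt (bst g u v w k) 0 1 2 3 = 1 := by
      have : dt (bst g u v w k) 0 1 2 3 = g * (1 + k * (u^2+v^2+w^2)) - (u^2+v^2+w^2) := by
        simp [dt, bst]
        ring
      rw [this, h1, h3]; ring
    intro i j k l
    rw [tr4_eta, dt_eta, hd, one_mul]

lemma Fr_neg {L : Fin 4 → Fin 4 → ℝ} (h : Fr L) : Fr (fun a b => - L a b) := by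
  have e : ∀ x : Fin 4 → ℝ, ∀ i, D (fun a b => - L a b) x i = - D L x i := by
    intro x i; simp [D]
  constructor
  · intro a b; rw [← h.h1]; simp
  · intro i j
    rw [← h.h2]
    simp only [e, D_neg, neg_neg]
  · intro i j k l
    rw [← h.h3]
    simp only [tr4, e, D_neg, neg_neg]

lemma exists_Fr_pos (g u v w : ℝ) (hg : 0 < g) (h3 : u^2 + v^2 + w^2 = g^2 - 1) :
    Fr (bst g u v w (1 / (1 + g))) := by
  have : 1 + g ≠ 0 := by positivity
  refine Fr_bst _ _ _ _ _ ?_ ?_ h3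
  · rw [h3]; field_simp; ring
  · field_simp; ring

lemma exists_Fr (n : Fin 4 → ℝ) (hn : (∑ a, ∑ b, gm a b * n a * n b) = -1) :
    ∃ L, Fr L ∧ n = fun b => L b 0 := by
  have h3 : (n 1)^2 + (n 2)^2 + (n 3)^2 = (n 0)^2 - 1 := by
    simp [Fin.sum_univ_four, gm] at hn
    linear_combination hn
  rcases lt_trichotomy (n 0) 0 with h | h | h
  · refine ⟨_, Fr_neg (exists_Fr_pos (-n 0) (-n 1) (-n 2) (-n 3) (by linarith) ?_), ?_⟩
    · linear_combination h3
    · funext b; revert b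
      refine forall4 ?_ ?_ ?_ ?_ <;> simp [bst]
  · exfalso
    rw [h] at h3
    nlinarith [sq_nonneg (n 1), sq_nonneg (n 2), sq_nonneg (n 3)]
  · refine ⟨_, exists_Fr_pos (n 0) (n 1) (n 2) (n 3) h h3, ?_⟩
    funext b; revert b
    refine forall4 ?_ ?_ ?_ ?_ <;> simp [bst]

end boost

end BRSplit

/-- Orthogonal splitting of the Bel-Robinson tensor:
`T_{abcd} = W n_a n_b n_c n_d + 4 𝒫_{(a} n_b n_c n_{d)} + 6 t_{(ab} n_c n_{d)}`
`+ 4 Q_{(abc} n_{d)} + t_{abcd}`. -/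
theorem bel_robinson_orthogonal_splitting
    (C : Tensor4) (hC : WeylSymm C)
    (n : Fin 4 → ℝ) (hn : (∑ a, ∑ b, gm a b * n a * n b) = -1) :
    ∀ a b c d : Fin 4,
      BR C a b c d =
        Wse C n * lo n a * lo n b * lo n c * lo n d
        + 4 * sym4 (fun x y z w => Pse C n x * lo n y * lo n z * lo n w) a b c d
        + 6 * sym4 (fun x y z w => tse C n x y * lo n z * lo n w) a b c d
        + 4 * sym4 (fun x y z w => Qse C n x y z * lo n w) a b c d
        + tse4 C n a b c d := by
  intro a b c d
  obtain ⟨L, hL, rfl⟩ := BRSplit.exists_Fr n hn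
  obtain ⟨x1, x2, x3, x4, x5, y1, y2, y3, y4, y5, h⟩ :=
    BRSplit.exists_Cmp (BRSplit.weyl_tr4 hL hC)
  have key := BRSplit.tr4_inj hL (BRSplit.Goal C fun b => L b 0)
    (fun i j k l => by
      rw [BRSplit.Goal_cov hL]
      exact BRSplit.core h (BRSplit.EB_of h) i j k l) a b c d
  rw [BRSplit.BR_eq]
  exact sub_eq_zero.mp key
end
end
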